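/- arXiv:1008.4349 — 4 statements merged into one kernel-verified Lean document; each statement's English description precedes it below -/
import Mathlib

section
/- Let X be a compact metric space, r : X → X a Borel measurable, onto, finite-to-one map, μ a strongly invariant Borel probability measure with respect to which r is ergodic, and m0 ∈ L∞(X) a non-singular QMF filter with |m0| not μ-a.e. equal to 1 and log|m0|² ∈ L¹(X,μ). Let (X_∞, μ_∞) be the solenoid with the path-space measure built from the transition weights W(x) = |m0(x)|²/#r⁻¹(r(x)), and r_∞ the shift automorphism on X_∞. Then r_∞ is NOT ergodic with respect to μ_∞: there exists a measurable set A ⊆ X_∞ with r_∞⁻¹(A) = A up to μ_∞-null sets and 0 < μ_∞(A) < μ_∞(X_∞). -/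
open MeasureTheory Filter

noncomputable section

/-- A complex-valued function is "in `L∞`" if it is measurable and (everywhere) bounded. -/
def BddMeasC {X : Type*} [MeasurableSpace X] (f : X → ℂ) : Prop :=
  Measurable f ∧ ∃ C, ∀ x, ‖f x‖ ≤ C

/-- `μ` is strongly invariant for `r`:
`∫ f dμ = ∫ (1/#r⁻¹(x)) Σ_{r(y)=x} f(y) dμ(x)` for all bounded measurable `f`. -/
def StronglyInvariant {X : Type*} [MeasurableSpace X] (r : X → X) (μ : Measure X) : Prop :=
  ∀ f : X → ℝ, Measurable f → (∃ C, ∀ x, |f x| ≤ C) →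
    ∫ x, f x ∂μ =
      ∫ x, (Nat.card (r ⁻¹' {x}) : ℝ)⁻¹ * ∑' y : (r ⁻¹' {x}), f (y : X) ∂μ

/-- `m0` is a quadrature mirror filter: `(1/#r⁻¹(x)) Σ_{r(y)=x} |m0(y)|² = 1` for μ-a.e. `x`. -/
def IsQMF {X : Type*} [MeasurableSpace X] (r : X → X) (μ : Measure X) (m0 : X → ℂ) : Prop :=
  ∀ᵐ x ∂μ, (Nat.card (r ⁻¹' {x}) : ℝ)⁻¹ * ∑' y : (r ⁻¹' {x}), ‖m0 (y : X)‖ ^ 2 = 1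


/-- The solenoid of `r`: the set of backward orbits `(x₀, x₁, …)` with `r(x_{n+1}) = x_n`. -/
def Solenoid {X : Type*} (r : X → X) : Set (ℕ → X) :=
  {z | ∀ n : ℕ, r (z (n + 1)) = z n}

/-- The shift automorphism `r_∞(x₀, x₁, …) = (r(x₀), x₀, x₁, …)` on the solenoid. -/
def rInf {X : Type*} (r : X → X) (z : Solenoid r) : Solenoid r :=
  ⟨fun n => Nat.casesOn n (r (z.1 0)) z.1, by
    intro n
    cases n with
    | zero => rfl
    | succ m => exact z.2 m⟩

/-- `ν` is the path-space measure on the solenoid built from the transition weights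
`W(x) = |m0(x)|²/#r⁻¹(r(x))`: for every cylinder function `g` of the first `n+1` coordinates,
`∫ g dν = ∫_X Σ_{paths (x, z₁, …, z_n) starting at x} W(z₁)⋯W(z_n) g(x, z₁, …, z_n) dμ(x)`,
i.e. `∫ g dν = ∫_X ∫_{Ω_x} g dP_x dμ(x)` with `P_x` the path measures. -/
def IsPathMeasure {X : Type*} [MeasurableSpace X] (r : X → X) (μ : Measure X) (m0 : X → ℂ)
    (ν : Measure (Solenoid r)) : Prop :=
  ∀ (n : ℕ) (g : (Fin (n + 1) → X) → ℝ), Measurable g → (∃ C, ∀ v, |g v| ≤ C) →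
    ∫ z, g (fun i => z.1 (i : ℕ)) ∂ν =
      ∫ x, ∑' q : {q : Fin (n + 1) → X //
            q 0 = x ∧ ∀ i : Fin n, r (q i.succ) = q i.castSucc},
          (∏ i : Fin n,
            ‖m0 (q.1 i.succ)‖ ^ 2 / (Nat.card (r ⁻¹' {r (q.1 i.succ)}) : ℝ)) * g q.1 ∂μ


/-- maximal ergodic lemma iterates -/
def maxIt {X : Type*} (r : X → X) (g : X → ℝ) : ℕ → X → ℝ
  | 0 => fun _ => 0
  | n + 1 => fun x => max 0 (g x + maxIt r g n (r x))

lemma maxIt_nonneg {X : Type*} (r : X → X) (g : X → ℝ) (n : ℕ) (x : X) :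
    0 ≤ maxIt r g n x := by
  cases n with
  | zero => simp [maxIt]
  | succ n => simp [maxIt]

lemma maxIt_le_succ {X : Type*} (r : X → X) (g : X → ℝ) (n : ℕ) :
    ∀ x : X, maxIt r g n x ≤ maxIt r g (n + 1) x := by
  induction n with
  | zero => intro x; simp [maxIt]
  | succ n ih =>
    intro x
    have := ih (r x)
    simp only [maxIt] at this ⊢
    gcongr

lemma birkhoffSum_le_maxIt {X : Type*} (r : X → X) (g : X → ℝ) (n : ℕ) :
    ∀ x : X, birkhoffSum r g n x ≤ maxIt r g n x := by
  induction n with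
  | zero => intro x; simp [maxIt]
  | succ n ih =>
    intro x
    rw [birkhoffSum_succ']
    simp only [maxIt]
    exact le_max_of_le_right (by linarith [ih (r x)])

lemma maxIt_measurable {X : Type*} [MeasurableSpace X] (r : X → X) (hr : Measurable r) (g : X → ℝ)
    (hg : Measurable g) (n : ℕ) : Measurable (maxIt r g n) := by
  induction n with
  | zero => exact measurable_const
  | succ n ih => exact measurable_const.max (hg.add (ih.comp hr))

lemma maxIt_integrable {X : Type*} [MeasurableSpace X] (r : X → X) (μ : Measure X)
    (hr : MeasurePreserving r μ μ) (g : X → ℝ)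
    (hg : Integrable g μ) (n : ℕ) : Integrable (maxIt r g n) μ := by
  induction n with
  | zero => exact integrable_zero _ _ _
  | succ n ih =>
    exact (integrable_zero _ _ _).sup (hg.add (hr.integrable_comp_of_integrable ih))

lemma birkhoff_bdd {X : Type*} [MeasurableSpace X] (r : X → X) (μ : Measure X)
    (herg : Ergodic r μ) (g : X → ℝ) (hgm : Measurable g)
    (hg : Integrable g μ) (hneg : ∫ x, g x ∂μ < 0) :
    ∀ᵐ x ∂μ, ∃ C, ∀ n, birkhoffSum r g n x ≤ C := by
  have hmp := herg.toMeasurePreserving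
  set E : Set X := {x | ∀ N : ℕ, ∃ n, (N : ℝ) < maxIt r g n x} with hE
  have hEm : MeasurableSet E := by
    have : E = ⋂ N : ℕ, ⋃ n, {x | (N : ℝ) < maxIt r g n x} := by
      ext x; simp [hE]
    rw [this]
    exact MeasurableSet.iInter fun N => MeasurableSet.iUnion fun n =>
      measurableSet_lt measurable_const (maxIt_measurable r hmp.measurable g hgm n)
  have hEi : r ⁻¹' E = E := by
    ext x
    simp only [hE, Set.mem_preimage, Set.mem_ofPred_eq]
    constructor
    · intro h N
      obtain ⟨M, hM⟩ := exists_nat_gt ((N : ℝ) - g x)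
      obtain ⟨n, hn⟩ := h M
      refine ⟨n + 1, ?_⟩
      simp only [maxIt]
      exact lt_max_of_lt_right (by linarith)
    · intro h N
      obtain ⟨M, hM⟩ := exists_nat_gt ((N : ℝ) + |g x|)
      obtain ⟨n, hn⟩ := h M
      refine ⟨n, ?_⟩
      have h1 := hn.trans_le (maxIt_le_succ r g n x)
      simp only [maxIt] at h1
      have h2 := le_abs_self (g x)
      have h4 := abs_nonneg (g x)
      have h3 := maxIt_nonneg r g n (r x)
      have h5 : (0:ℝ) ≤ N := Nat.cast_nonneg N
      rcases lt_max_iff.1 h1 with h | h <;> linarith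
  rcases herg.toPreErgodic.measure_self_or_compl_eq_zero hEm hEi with h0 | h0
  · have : ∀ᵐ x ∂μ, x ∉ E := measure_eq_zero_iff_ae_notMem.1 h0
    filter_upwards [this] with x hx
    simp only [hE, Set.mem_ofPred_eq, not_forall, not_exists, not_lt] at hx
    obtain ⟨N, hN⟩ := hx
    exact ⟨N, fun n => (birkhoffSum_le_maxIt r g n x).trans (hN n)⟩
  · exfalso
    have hall : ∀ᵐ x ∂μ, x ∈ E := by
      have : ∀ᵐ x ∂μ, x ∉ Eᶜ := measure_eq_zero_iff_ae_notMem.1 h0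
      filter_upwards [this] with x hx using by simpa using hx
    have hlim : Tendsto (fun n => ∫ x, max (-maxIt r g n (r x)) (g x) ∂μ) atTop
        (nhds (∫ x, g x ∂μ)) := by
      refine tendsto_integral_of_dominated_convergence (fun x => |g x|) ?_ hg.abs ?_ ?_
      · intro n
        exact (((maxIt_measurable r hmp.measurable g hgm n).comp
          hmp.measurable).neg.max hgm).aestronglyMeasurable
      · intro n
        refine Eventually.of_forall fun x => ?_
        have h3 := maxIt_nonneg r g n (r x)
        rw [Real.norm_eq_abs, abs_le]
        refine ⟨le_max_of_le_right (neg_abs_le _), max_le ?_ (le_abs_self _)⟩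
        linarith [abs_nonneg (g x)]
      · filter_upwards [hall] with x hx
        have hx' : r x ∈ E := by rw [← Set.mem_preimage, hEi]; exact hx
        obtain ⟨M, hM⟩ := exists_nat_gt (-(g x))
        obtain ⟨n, hn⟩ := hx' M
        have hmono : Monotone (fun n => maxIt r g n (r x)) :=
          monotone_nat_of_le_succ fun n => maxIt_le_succ r g n (r x)
        refine tendsto_const_nhds.congr' ?_
        filter_upwards [eventually_ge_atTop n] with k hk
        have := hmono hk
        simp only at this
        rw [max_eq_right]
        linarith
    have hnn : ∀ n, 0 ≤ ∫ x, max (-maxIt r g n (r x)) (g x) ∂μ := by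
      intro n
      have hi := maxIt_integrable r μ hmp g hg
      have hic : Integrable (fun x => maxIt r g n (r x)) μ :=
        hmp.integrable_comp_of_integrable (hi n)
      have e1 : ∫ x, maxIt r g n (r x) ∂μ = ∫ x, maxIt r g n x ∂μ := by
        have := integral_map (μ := μ) hmp.measurable.aemeasurable (f := maxIt r g n)
          (maxIt_measurable r hmp.measurable g hgm n).aestronglyMeasurable
        rw [hmp.map_eq] at this
        exact this.symm
      have e2 : ∫ x, max (-maxIt r g n (r x)) (g x) ∂μ
          = ∫ x, (maxIt r g (n+1) x - maxIt r g n (r x)) ∂μ := by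
        congr 1; ext x
        simp only [maxIt]
        rw [← max_sub_sub_right]; congr 1 <;> ring
      rw [e2, integral_sub (hi _) hic, e1, sub_nonneg]
      exact integral_mono (hi _) (hi _) (fun x => maxIt_le_succ r g n x)
    have := ge_of_tendsto' hlim hnn
    linarith

/-- averaging operator -/
def EOp {X : Type*} (r : X → X) (f : X → ℝ) (x : X) : ℝ :=
  (Nat.card (r ⁻¹' {x}) : ℝ)⁻¹ * ∑' y : (r ⁻¹' {x}), f (y : X)

/-- transfer operator -/
def POp {X : Type*} (r : X → X) (w : X → ℝ) (f : X → ℝ) : X → ℝ :=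
  EOp r (fun y => w y * f y)

lemma card_pos_fib {X : Type*} (r : X → X) (hsurj : Function.Surjective r)
    (hfin : ∀ x : X, (r ⁻¹' {x}).Finite) (x : X) : 0 < (Nat.card (r ⁻¹' {x}) : ℝ) := by
  have := (hfin x).to_subtype
  obtain ⟨y, hy⟩ := hsurj x
  have : Nonempty (r ⁻¹' {x}) := ⟨⟨y, hy⟩⟩
  exact_mod_cast Nat.card_pos

lemma EOp_add_const {X : Type*} (r : X → X) (hsurj : Function.Surjective r)
    (hfin : ∀ x : X, (r ⁻¹' {x}).Finite) (f : X → ℝ) (c : ℝ) (x : X) :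
    EOp r (fun y => f y + c) x = EOp r f x + c := by
  have := (hfin x).to_subtype
  have := Fintype.ofFinite (r ⁻¹' {x})
  have h := card_pos_fib r hsurj hfin x
  simp only [EOp, tsum_fintype, Finset.sum_add_distrib, mul_add]
  congr 1
  rw [Finset.sum_const, Finset.card_univ, ← Nat.card_eq_fintype_card, nsmul_eq_mul]
  field_simp

lemma EOp_mono {X : Type*} (r : X → X) 
    (hfin : ∀ x : X, (r ⁻¹' {x}).Finite) (f g : X → ℝ) (x : X) (h : ∀ y, r y = x → f y ≤ g y) :
    EOp r f x ≤ EOp r g x := by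
  have := (hfin x).to_subtype
  have := Fintype.ofFinite (r ⁻¹' {x})
  simp only [EOp, tsum_fintype]
  gcongr with i
  exact h _ i.2

lemma EOp_congr {X : Type*} (r : X → X) 
    (f g : X → ℝ) (x : X) (h : ∀ y, r y = x → f y = g y) :
    EOp r f x = EOp r g x := by
  simp only [EOp]
  congr 1
  exact tsum_congr fun i => h _ i.2

lemma EOp_mul {X : Type*} (r : X → X) 
    (f : X → ℝ) (c : ℝ) (x : X) :
    EOp r (fun y => c * f y) x = c * EOp r f x := by
  simp only [EOp, tsum_mul_left]
  ring

lemma EOp_integrable {X : Type*} [MeasurableSpace X] (r : X → X) (hsurj : Function.Surjective r)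
    (hfin : ∀ x : X, (r ⁻¹' {x}).Finite)
    (μ : Measure X) [IsProbabilityMeasure μ] (hinv : StronglyInvariant r μ)
    (f : X → ℝ) (hf : Measurable f) (C : ℝ) (hC : ∀ x, |f x| ≤ C) : Integrable (EOp r f) μ := by
  have h1 := hinv (fun x => f x + (C + 1)) (hf.add_const _) ⟨C + |C + 1|, fun x =>
    (abs_add_le _ _).trans (by gcongr; exact hC x)⟩
  have hfi : Integrable f μ := Integrable.of_bound hf.aestronglyMeasurable C
    (Eventually.of_forall hC)
  have h2 : (1:ℝ) ≤ ∫ x, f x + (C + 1) ∂μ := by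
    have : ∫ x, (1:ℝ) ∂μ ≤ ∫ x, f x + (C + 1) ∂μ := by
      refine integral_mono (integrable_const _) (hfi.add (integrable_const _)) fun x => ?_
      have := (abs_le.1 (hC x)).1
      simp only
      linarith
    simpa using this
  have h3 : Integrable (EOp r (fun x => f x + (C + 1))) μ := by
    by_contra hcon
    have := integral_undef hcon
    simp only [EOp] at this
    rw [this] at h1
    linarith
  have h4 := h3.sub (integrable_const (C + 1))
  refine h4.congr (Eventually.of_forall fun x => ?_)
  simp [EOp_add_const r hsurj hfin]

lemma ae_fib {X : Type*} [MeasurableSpace X] (r : X → X) (hsurj : Function.Surjective r)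
    (hfin : ∀ x : X, (r ⁻¹' {x}).Finite)
    (μ : Measure X) [IsProbabilityMeasure μ] (hinv : StronglyInvariant r μ)
    (p : X → Prop) (hp : ∀ᵐ x ∂μ, p x) : ∀ᵐ x ∂μ, ∀ y, r y = x → p y := by
  obtain ⟨N, hN, hNm, hN0⟩ := exists_measurable_superset_of_null (ae_iff.1 hp)
  set f : X → ℝ := N.indicator 1 with hf
  have hfm : Measurable f := measurable_one.indicator hNm
  have hf0 : ∀ x, 0 ≤ f x := fun x => Set.indicator_nonneg (by simp) x
  have hfb : ∀ x, |f x| ≤ 1 := fun x => by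
    by_cases h : x ∈ N <;> simp [hf, h]
  have h1 := hinv f hfm ⟨1, hfb⟩
  have h2 := EOp_integrable r hsurj hfin μ hinv f hfm 1 hfb
  have h3 : ∫ x, f x ∂μ = 0 := by
    rw [hf, integral_indicator_one hNm]; simp [measureReal_def, hN0]
  have h4 : 0 ≤ EOp r f := fun x => by
    have := EOp_mono r hfin (fun _ => 0) f x (fun y _ => hf0 y)
    simpa [EOp] using this
  have h5 : ∫ x, EOp r f x ∂μ = 0 := by
    simp only [EOp]; rw [← h1, h3]
  have h6 := (integral_eq_zero_iff_of_nonneg h4 h2).1 h5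
  filter_upwards [h6] with x hx y hy
  by_contra hpy
  have hyN : y ∈ N := hN hpy
  have := (hfin x).to_subtype
  have := Fintype.ofFinite (r ⁻¹' {x})
  have hc := card_pos_fib r hsurj hfin x
  simp only [EOp, tsum_fintype, Pi.zero_apply, mul_eq_zero, inv_eq_zero] at hx
  rcases hx with hx | hx
  · exact hc.ne' hx
  · rw [Finset.sum_eq_zero_iff_of_nonneg (fun i _ => hf0 _)] at hx
    have := hx ⟨y, hy⟩ (Finset.mem_univ _)
    simp [hf, hyN] at this

/-- paths -/
abbrev Paths {X : Type*} (r : X → X) (n : ℕ) (x : X) : Type _ :=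
  {q : Fin (n + 1) → X // q 0 = x ∧ ∀ i : Fin n, r (q i.succ) = q i.castSucc}

/-- splitting off the first step of a path -/
def pathEquiv {X : Type*} (r : X → X) (n : ℕ) (x : X) :
    Paths r (n + 1) x ≃ Σ y : (r ⁻¹' {x}), Paths r n (y : X) where
  toFun q := ⟨⟨q.1 1, by
      have := q.2.2 0
      simp only [Fin.succ_zero_eq_one, Fin.castSucc_zero] at this
      simp [this, q.2.1]⟩, ⟨fun i => q.1 i.succ, by simp, fun i => by
      have := q.2.2 i.succ
      simpa using this⟩⟩
  invFun p := ⟨Fin.cons x p.2.1, by simp, fun i => by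
      refine Fin.cases ?_ (fun j => ?_) i
      · have h1 := p.1.2
        simp only [Set.mem_preimage, Set.mem_singleton_iff] at h1
        simp [p.2.2.1, h1]
      · have := p.2.2.2 j
        simpa using this⟩
  left_inv q := by
    apply Subtype.ext
    funext i
    refine Fin.cases ?_ (fun j => ?_) i
    · simp [q.2.1]
    · simp
  right_inv p := by
    obtain ⟨⟨y, hy⟩, ⟨q, hq0, hq⟩⟩ := p
    simp only at hq0
    subst hq0
    rfl

lemma paths_finite {X : Type*} (r : X → X) (hfin : ∀ x : X, (r ⁻¹' {x}).Finite) (n : ℕ) :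
    ∀ x, Finite (Paths r n x) := by
  induction n with
  | zero =>
    intro x
    have : Subsingleton (Paths r 0 x) := ⟨fun a b => by
      apply Subtype.ext
      funext i
      rw [show i = 0 from Fin.ext (by omega), a.2.1, b.2.1]⟩
    infer_instance
  | succ n ih =>
    intro x
    have := (hfin x).to_subtype
    have := fun y : (r ⁻¹' {x}) => ih y
    exact Finite.of_equiv _ (pathEquiv r n x).symm

lemma pathSum_eq {X : Type*} (r : X → X) (hfin : ∀ x : X, (r ⁻¹' {x}).Finite)
    (w h : X → ℝ) (n : ℕ) : ∀ x,
    ∑' q : Paths r n x, (∏ i : Fin n, w (q.1 i.succ) / (Nat.card (r ⁻¹' {r (q.1 i.succ)}) : ℝ))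
      * h (q.1 (Fin.last n)) = (POp r w)^[n] h x := by
  induction n with
  | zero =>
    intro x
    have hu : ∀ a : Paths r 0 x, a = ⟨fun _ => x, rfl, fun i => i.elim0⟩ := fun a => by
      apply Subtype.ext
      funext i
      rw [show i = 0 from Fin.ext (by omega), a.2.1]
    rw [tsum_eq_single ⟨fun _ => x, rfl, fun i => i.elim0⟩ (fun b hb => (hb (hu b)).elim)]
    simp
  | succ n ih =>
    intro x
    have := (hfin x).to_subtype
    have := fun y : X => paths_finite r hfin n y
    have := paths_finite r hfin (n+1) x
    rw [Function.iterate_succ_apply']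
    rw [← (pathEquiv r n x).symm.tsum_eq]
    rw [Summable.tsum_sigma' (fun b => Summable.of_finite) Summable.of_finite]
    simp only [POp, EOp]
    rw [← tsum_mul_left]
    refine tsum_congr fun y => ?_
    rw [← ih, ← mul_assoc, ← tsum_mul_left]
    refine tsum_congr fun q => ?_
    have hy : r (y : X) = x := y.2
    simp only [pathEquiv, Equiv.coe_fn_symm_mk, Fin.cons_succ, ← Fin.succ_last]
    rw [Fin.prod_univ_succ]
    simp only [q.2.1, hy]
    ring

lemma POp_iter_ae {X : Type*} [MeasurableSpace X] (r : X → X) (hsurj : Function.Surjective r)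
    (hfin : ∀ x : X, (r ⁻¹' {x}).Finite)
    (μ : Measure X) [IsProbabilityMeasure μ] (hinv : StronglyInvariant r μ) (w : X → ℝ)
    (f g : X → ℝ) (hfg : f =ᵐ[μ] g) (n : ℕ) : (POp r w)^[n] f =ᵐ[μ] (POp r w)^[n] g := by
  induction n with
  | zero => exact hfg
  | succ n ih =>
    rw [Function.iterate_succ', Function.comp_apply, Function.comp_apply]
    filter_upwards [ae_fib r hsurj hfin μ hinv _ ih] with x hx
    exact EOp_congr r _ _ x fun y hy => by simp only [hx y hy]

/-- product cocycle -/
def coc {X : Type*} (r : X → X) (w : X → ℝ) (n : ℕ) (x : X) : ℝ :=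
  ∏ k ∈ Finset.range n, w (r^[k] x)

lemma coc_succ {X : Type*} (r : X → X) (w : X → ℝ) (n : ℕ) (x : X) :
    coc r w (n + 1) x = coc r w n (r x) * w x := by
  simp [coc, Finset.prod_range_succ']

lemma coc_meas {X : Type*} [MeasurableSpace X] (r : X → X) (hr : Measurable r) (w : X → ℝ)
    (hw : Measurable w) (n : ℕ) : Measurable (coc r w n) :=
  Finset.measurable_prod _ fun k _ => hw.comp (hr.iterate k)

lemma coc_nonneg {X : Type*} (r : X → X) (w : X → ℝ) (hw : ∀ x, 0 ≤ w x) (n : ℕ) (x : X) :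
    0 ≤ coc r w n x := Finset.prod_nonneg fun k _ => hw _

lemma coc_bdd {X : Type*} (r : X → X) (w : X → ℝ) (hw : ∀ x, 0 ≤ w x) (C : ℝ)
    (hC : ∀ x, w x ≤ C) (n : ℕ) (x : X) : coc r w n x ≤ C ^ n := by
  refine (Finset.prod_le_prod (fun k _ => hw _) (fun k _ => hC _)).trans ?_
  simp

lemma int_POp_iter {X : Type*} [MeasurableSpace X] (r : X → X) (hr : Measurable r)
    (hsurj : Function.Surjective r)
    (hfin : ∀ x : X, (r ⁻¹' {x}).Finite)
    (μ : Measure X) [IsProbabilityMeasure μ] (hinv : StronglyInvariant r μ) (w : X → ℝ)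
    (hw : Measurable w) (hw0 : ∀ x, 0 ≤ w x) (C : ℝ) (hC : ∀ x, w x ≤ C)
    (hq : ∀ᵐ x ∂μ, EOp r w x = 1) (n : ℕ) :
    ∀ h : X → ℝ, Measurable h → (∀ x, 0 ≤ h x) → (∀ x, h x ≤ 1) →
    ∫ x, (POp r w)^[n] h x ∂μ = ∫ x, coc r w n x * h x ∂μ := by
  induction n with
  | zero => intro h _ _ _; simp [coc]
  | succ n ih =>
    intro h hm h0 h1
    have hwhb : ∀ x, |w x * h x| ≤ C := fun x => by
      rw [abs_of_nonneg (mul_nonneg (hw0 x) (h0 x))]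
      nlinarith [hw0 x, h0 x, h1 x, hC x]
    have hPi : Integrable (POp r w h) μ :=
      EOp_integrable r hsurj hfin μ hinv (fun y => w y * h y) (hw.mul hm) C hwhb
    have hPm := hPi.aestronglyMeasurable.aemeasurable
    set h' : X → ℝ := fun x => max 0 (min 1 (hPm.mk _ x)) with hh'
    have hP0 : ∀ x, 0 ≤ POp r w h x := fun x => by
      have := EOp_mono r hfin (fun _ => 0) (fun y => w y * h y) x
        (fun y _ => mul_nonneg (hw0 y) (h0 y))
      simpa [EOp, POp] using this
    have hP1 : ∀ᵐ x ∂μ, POp r w h x ≤ 1 := by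
      filter_upwards [hq] with x hx
      rw [← hx]
      exact EOp_mono r hfin _ _ x (fun y _ => by nlinarith [hw0 y, h1 y])
    have hae : POp r w h =ᵐ[μ] h' := by
      filter_upwards [hP1, hPm.ae_eq_mk] with x hx1 hx2
      simp only [hh']
      rw [← hx2, min_eq_right hx1, max_eq_right (hP0 x)]
    have hm' : Measurable h' := measurable_const.max (measurable_const.min hPm.measurable_mk)
    rw [Function.iterate_succ, Function.comp_apply,
      integral_congr_ae (POp_iter_ae r hsurj hfin μ hinv w _ _ hae n),
      ih h' hm' (fun x => le_max_left _ _) (fun x => max_le zero_le_one (min_le_left _ _))]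
    have e1 : ∫ x, coc r w n x * h' x ∂μ = ∫ x, coc r w n x * POp r w h x ∂μ := by
      refine integral_congr_ae ?_
      filter_upwards [hae] with x hx
      rw [hx]
    rw [e1]
    have e2 := hinv (fun x => coc r w (n+1) x * h x) ((coc_meas r hr w hw _).mul hm)
      ⟨C ^ (n+1), fun x => by
        have a := coc_nonneg r w hw0 (n+1) x
        have b := coc_bdd r w hw0 C hC (n+1) x
        rw [abs_of_nonneg (mul_nonneg a (h0 x))]
        nlinarith [h0 x, h1 x]⟩
    rw [e2]
    congr 1
    ext x
    change _ = EOp r (fun x => coc r w (n+1) x * h x) x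
    rw [POp, ← EOp_mul]
    refine EOp_congr r _ _ x fun y hy => ?_
    simp only [coc_succ, hy]
    ring

lemma atom_case {X : Type*} [MetricSpace X] [CompactSpace X] [MeasurableSpace X] [BorelSpace X]
    (r : X → X) (hsurj : Function.Surjective r)
    (hfin : ∀ x : X, (r ⁻¹' {x}).Finite)
    (μ : Measure X) [IsProbabilityMeasure μ] (hinv : StronglyInvariant r μ)
    (herg : Ergodic r μ) (w : X → ℝ) (hq : ∀ᵐ x ∂μ, EOp r w x = 1)
    (c : X) (hc : μ {c} ≠ 0) : ∀ᵐ x ∂μ, w x = 1 := by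
  have key : ∀ x, μ.real {r x} = Nat.card (r ⁻¹' {r x}) * μ.real {x} := by
    intro x
    have h1 := hinv (Set.indicator {x} 1) (measurable_one.indicator (measurableSet_singleton x))
      ⟨1, fun y => by by_cases h : y = x <;> simp [h]⟩
    rw [integral_indicator_one (measurableSet_singleton x)] at h1
    have h2 : ∀ z, EOp r (Set.indicator {x} 1) z =
        (Set.indicator {r x} (fun _ => (Nat.card (r ⁻¹' {r x}) : ℝ)⁻¹)) z := by
      intro z
      by_cases hz : z = r x
      · subst hz
        simp only [EOp, Set.mem_singleton_iff, Set.indicator_of_mem]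
        rw [tsum_eq_single ⟨x, rfl⟩]
        · simp
        · intro b hb
          have : (b : X) ≠ x := fun h => hb (Subtype.ext h)
          simp [this]
      · have : EOp r (Set.indicator {x} 1) z = EOp r (fun _ => 0) z := by
          refine EOp_congr r _ _ z fun y hy => ?_
          have : y ≠ x := by rintro rfl; exact hz hy.symm
          simp [this]
        rw [this]
        simp [EOp, hz]
    have h3 : μ.real {x} = ∫ z, EOp r (Set.indicator {x} 1) z ∂μ := h1
    simp_rw [h2] at h3
    rw [integral_indicator_const _ (measurableSet_singleton _), smul_eq_mul] at h3
    have := card_pos_fib r hsurj hfin (r x)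
    rw [h3]
    field_simp
  have hge : ∀ x, μ.real {x} ≤ μ.real {r x} := fun x => by
    rw [key x]
    have h1 : 1 ≤ (Nat.card (r ⁻¹' {r x}) : ℝ) := by
      have := card_pos_fib r hsurj hfin (r x)
      exact_mod_cast Nat.one_le_iff_ne_zero.2 (by exact_mod_cast this.ne')
    exact le_mul_of_one_le_left measureReal_nonneg h1
  have hcount : Set.Countable {x | 0 < μ {x}} :=
    Measure.countable_meas_pos_of_disjoint_iUnion (μ := μ) (As := fun x : X => {x})
      (fun x => measurableSet_singleton x) (fun x y hxy => by simpa using hxy)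
  have hmeas : ∀ S : Set X, (∀ x ∈ S, 0 < μ.real {x}) → MeasurableSet S := by
    intro S hS
    refine (hcount.mono fun x hx => ?_).measurableSet
    exact (ENNReal.toReal_pos_iff.1 (hS x hx)).1
  have hcpos : 0 < μ.real {c} := ENNReal.toReal_pos hc (measure_ne_top _ _)
  have hdich : ∀ S : Set X, (∀ x ∈ S, 0 < μ.real {x}) → (∀ x ∈ S, r x ∈ S) →
      μ S = 0 ∨ μ Sᶜ = 0 := by
    intro S hS hS2
    have := herg.ae_empty_or_univ_of_ae_le_preimage (hmeas S hS).nullMeasurableSet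
      (Eventually.of_forall (fun x hx => hS2 x hx))
    rcases this with h | h
    · left; simpa using h
    · right; simpa using h
  have hle : ∀ᵐ x ∂μ, μ.real {x} ≤ μ.real {c} := by
    rcases hdich {x | μ.real {c} < μ.real {x}} (fun x hx => hcpos.trans hx)
      (fun x hx => lt_of_lt_of_le hx (hge x)) with h | h
    · filter_upwards [measure_eq_zero_iff_ae_notMem.1 h] with x hx
      simpa using hx
    · exfalso
      exact hc (measure_mono_null (by simp) h)
  have hge' : ∀ᵐ x ∂μ, μ.real {c} ≤ μ.real {x} := by
    rcases hdich {x | μ.real {c} ≤ μ.real {x}} (fun x hx => hcpos.trans_le hx)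
      (fun x hx => le_trans hx (hge x)) with h | h
    · exfalso
      exact hc (measure_mono_null (by simp) h)
    · filter_upwards [measure_eq_zero_iff_ae_notMem.1 h] with x hx
      simpa using hx
  have hqr := herg.toMeasurePreserving.quasiMeasurePreserving.ae hq
  have hler := herg.toMeasurePreserving.quasiMeasurePreserving.ae hle
  filter_upwards [hge', hqr, hler] with x h1 h2 h3
  have h4 := key x
  have hx0 : 0 < μ.real {x} := hcpos.trans_le h1
  have h5 : (Nat.card (r ⁻¹' {r x}) : ℝ) ≤ 1 := by
    by_contra hcon
    push Not at hcon
    nlinarith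
  have h6 : Nat.card (r ⁻¹' {r x}) = 1 := by
    have := card_pos_fib r hsurj hfin (r x)
    have a : Nat.card (r ⁻¹' {r x}) ≤ 1 := by exact_mod_cast h5
    have b : 0 < Nat.card (r ⁻¹' {r x}) := by exact_mod_cast this
    omega
  have hss := (Nat.card_eq_one_iff_unique.1 h6).1
  rw [EOp, h6, tsum_eq_single ⟨x, rfl⟩ (fun b hb => (hb (Subsingleton.elim _ _)).elim)] at h2
  simpa using h2

lemma log_neg {X : Type*} [MeasurableSpace X] (μ : Measure X) [IsProbabilityMeasure μ] (w : X → ℝ)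
    (hwi : Integrable w μ) (hpos : ∀ᵐ x ∂μ, 0 < w x)
    (hint : ∫ x, w x ∂μ = 1) (hne : ¬ ∀ᵐ x ∂μ, w x = 1)
    (hlog : Integrable (fun x => Real.log (w x)) μ) : ∫ x, Real.log (w x) ∂μ < 0 := by
  by_contra hcon
  push Not at hcon
  apply hne
  have hi : Integrable (fun x => w x - 1 - Real.log (w x)) μ :=
    (hwi.sub (integrable_const 1)).sub hlog
  have h0 : 0 ≤ᵐ[μ] fun x => w x - 1 - Real.log (w x) := by
    filter_upwards [hpos] with x hx
    have := Real.log_le_sub_one_of_pos hx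
    simp only [Pi.zero_apply]
    linarith
  have h1 : ∫ x, (w x - 1 - Real.log (w x)) ∂μ = 0 := by
    refine le_antisymm ?_ (integral_nonneg_of_ae h0)
    have hi1 : Integrable (fun x => w x - 1) μ := hwi.sub (integrable_const 1)
    rw [integral_sub hi1 hlog, integral_sub hwi (integrable_const 1),
      hint]
    simp only [integral_const, probReal_univ, smul_eq_mul]
    linarith
  have h2 := (integral_eq_zero_iff_of_nonneg_ae h0 hi).1 h1
  filter_upwards [hpos, h2] with x hx hx2
  by_contra hx1
  have := Real.log_lt_sub_one_of_pos hx hx1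
  simp only [Pi.zero_apply] at hx2
  linarith

lemma coc_summable {X : Type*} [MeasurableSpace X] (r : X → X) (μ : Measure X)
    [IsProbabilityMeasure μ]
    (herg : Ergodic r μ) (w : X → ℝ) (hwm : Measurable w) (hw0 : ∀ x, 0 ≤ w x)
    (hlog : Integrable (fun x => Real.log (w x)) μ) (hneg : ∫ x, Real.log (w x) ∂μ < 0) :
    ∀ᵐ x ∂μ, Summable (fun n => coc r w n x) := by
  set I := ∫ x, Real.log (w x) ∂μ with hI
  set e := -I / 2 with he
  have hepos : 0 < e := by simp only [he]; linarith
  have hb := birkhoff_bdd r μ herg (fun x => Real.log (w x) + e)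
    ((Real.measurable_log.comp hwm).add_const e) (hlog.add (integrable_const e)) (by
      rw [integral_add hlog (integrable_const e)]
      simp only [integral_const, probReal_univ, smul_eq_mul]
      linarith)
  filter_upwards [hb] with x hx
  obtain ⟨C, hC⟩ := hx
  have hgeo : Summable (fun n : ℕ => Real.exp C * Real.exp (-e) ^ n) :=
    (summable_geometric_of_lt_one (Real.exp_pos _).le
      (by rw [← Real.exp_zero]; exact Real.exp_lt_exp.2 (by linarith))).mul_left _
  refine hgeo.of_nonneg_of_le (fun n => coc_nonneg r w hw0 n x) fun n => ?_
  have h1 : coc r w n x ≤ Real.exp (∑ k ∈ Finset.range n, Real.log (w (r^[k] x))) := by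
    rw [Real.exp_sum]
    exact Finset.prod_le_prod (fun k _ => hw0 _) (fun k _ => Real.le_exp_log _)
  have h2 := hC n
  simp only [birkhoffSum, Finset.sum_add_distrib, Finset.sum_const, Finset.card_range,
    nsmul_eq_mul] at h2
  rw [← Real.exp_nat_mul, ← Real.exp_add]
  refine h1.trans (Real.exp_le_exp.2 ?_)
  linarith

lemma marginal {X : Type*} [MeasurableSpace X]
    (r : X → X) (hr : Measurable r) (hsurj : Function.Surjective r)
    (hfin : ∀ x : X, (r ⁻¹' {x}).Finite)
    (μ : Measure X) [IsProbabilityMeasure μ] (hinv : StronglyInvariant r μ)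
    (m0 : X → ℂ) (hwm : Measurable (fun x => ‖m0 x‖ ^ 2)) (C : ℝ)
    (hwC : ∀ x, ‖m0 x‖ ^ 2 ≤ C)
    (hq : ∀ᵐ x ∂μ, EOp r (fun x => ‖m0 x‖ ^ 2) x = 1)
    (ν : Measure (Solenoid r)) [IsFiniteMeasure ν] (hν : IsPathMeasure r μ m0 ν)
    (n : ℕ) (B : Set X) (hB : MeasurableSet B) :
    ν {z | z.1 n ∈ B} = ∫⁻ x in B, ENNReal.ofReal (coc r (fun x => ‖m0 x‖ ^ 2) n x) ∂μ := by
  set w : X → ℝ := fun x => ‖m0 x‖ ^ 2 with hw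
  have hw0 : ∀ x, 0 ≤ w x := fun x => sq_nonneg _
  set h : X → ℝ := B.indicator 1 with hh
  have hhm : Measurable h := measurable_one.indicator hB
  have h0 : ∀ x, 0 ≤ h x := fun x => Set.indicator_nonneg (by simp) x
  have h1 : ∀ x, h x ≤ 1 := fun x => by by_cases hx : x ∈ B <;> simp [hh, hx]
  have e1 := hν n (fun q => h (q (Fin.last n))) (hhm.comp (measurable_pi_apply _))
    ⟨1, fun v => by rw [abs_of_nonneg (h0 _)]; exact h1 _⟩
  have e2 : ∫ z : Solenoid r, h (z.1 n) ∂ν = ∫ x, (POp r w)^[n] h x ∂μ := by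
    have : ∀ x, _ = (POp r w)^[n] h x := pathSum_eq r hfin w h n
    simp_rw [← this]
    exact e1
  rw [int_POp_iter r hr hsurj hfin μ hinv w hwm hw0 C hwC hq n h hhm h0 h1] at e2
  have hmeas : MeasurableSet {z : Solenoid r | z.1 n ∈ B} :=
    ((measurable_pi_apply n).comp measurable_subtype_coe) hB
  have e3 : ∫ z : Solenoid r, h (z.1 n) ∂ν = ν.real {z : Solenoid r | z.1 n ∈ B} := by
    rw [← integral_indicator_one hmeas]
    rfl
  have e4 : ∫ x, coc r w n x * h x ∂μ = ∫ x in B, coc r w n x ∂μ := by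
    rw [← integral_indicator hB]
    congr 1; ext x
    by_cases hx : x ∈ B <;> simp [hh, hx]
  have hint : Integrable (coc r w n) (μ.restrict B) :=
    Integrable.of_bound (coc_meas r hr w hwm n).aestronglyMeasurable (C ^ n)
      (Eventually.of_forall fun x => by
        rw [Real.norm_eq_abs, abs_of_nonneg (coc_nonneg r w hw0 n x)]
        exact coc_bdd r w hw0 C hwC n x)
  rw [← ofReal_integral_eq_lintegral_ofReal hint
    (Eventually.of_forall fun x => coc_nonneg r w hw0 n x), ← e4, ← e2, e3]
  exact (ofReal_measureReal).symm

/-- backward shift -/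
def shS {X : Type*} (r : X → X) (z : Solenoid r) : Solenoid r :=
  ⟨fun n => z.1 (n + 1), fun n => z.2 (n + 1)⟩

lemma shS_rInf {X : Type*} (r : X → X) (z : Solenoid r) : shS r (rInf r z) = z := rfl

lemma rInf_shS {X : Type*} (r : X → X) (z : Solenoid r) : rInf r (shS r z) = z := by
  apply Subtype.ext
  funext n
  cases n with
  | zero => exact z.2 0
  | succ n => rfl

lemma shS_iter {X : Type*} (r : X → X) (k : ℕ) : ∀ (z : Solenoid r) (n : ℕ),
    ((shS r)^[k] z).1 n = z.1 (n + k) := by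
  induction k with
  | zero => intro z n; rfl
  | succ k ih =>
    intro z n
    rw [Function.iterate_succ_apply, ih]
    simp only [shS]
    congr 1

lemma shS_meas {X : Type*} [MeasurableSpace X] (r : X → X) : Measurable (shS r) := by
  refine Measurable.subtype_mk (measurable_pi_lambda _ fun n => ?_)
  exact (measurable_pi_apply (n+1)).comp measurable_subtype_coe

lemma rInf_meas {X : Type*} [MeasurableSpace X] (r : X → X) (hr : Measurable r) :
    Measurable (rInf r) := by
  refine Measurable.subtype_mk (measurable_pi_lambda _ fun n => ?_)
  cases n with
  | zero => exact hr.comp ((measurable_pi_apply 0).comp measurable_subtype_coe)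
  | succ n => exact (measurable_pi_apply n).comp measurable_subtype_coe

/-- saturation of a set -/
def satur {X : Type*} (r : X → X) (V : Set (Solenoid r)) : Set (Solenoid r) :=
  {z | ∃ k, (rInf r)^[k] z ∈ V ∨ (shS r)^[k] z ∈ V}

lemma satur_meas {X : Type*} [MeasurableSpace X] (r : X → X) (hr : Measurable r)
    (V : Set (Solenoid r)) (hV : MeasurableSet V) : MeasurableSet (satur r V) := by
  have : satur r V = ⋃ k, ((rInf r)^[k] ⁻¹' V ∪ (shS r)^[k] ⁻¹' V) := by
    ext z; simp [satur]
  rw [this]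
  exact MeasurableSet.iUnion fun k => (((rInf_meas r hr).iterate k) hV).union
    (((shS_meas r).iterate k) hV)

lemma satur_inv {X : Type*} (r : X → X) 
    (V : Set (Solenoid r)) : rInf r ⁻¹' (satur r V) = satur r V := by
  ext z
  constructor
  · rintro ⟨k, hk | hk⟩
    · exact ⟨k + 1, Or.inl (by rwa [Function.iterate_succ_apply])⟩
    · cases k with
      | zero => exact ⟨1, Or.inl hk⟩
      | succ k =>
        rw [Function.iterate_succ_apply, shS_rInf] at hk
        exact ⟨k, Or.inr hk⟩
  · rintro ⟨k, hk | hk⟩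
    · cases k with
      | zero => exact ⟨1, Or.inr hk⟩
      | succ k =>
        rw [Function.iterate_succ_apply] at hk
        exact ⟨k, Or.inl hk⟩
    · exact ⟨k + 1, Or.inr (by rwa [Function.iterate_succ_apply, shS_rInf])⟩

/-- wandering set -/
def wand {X : Type*} (r : X → X) (B : Set X) (n : ℕ) : Set (Solenoid r) :=
  {z | z.1 n ∈ B ∧ ∀ j, n < j → z.1 j ∉ B}

lemma wand_meas {X : Type*} [MeasurableSpace X] (r : X → X) (B : Set X) (hB : MeasurableSet B)
    (n : ℕ) : MeasurableSet (wand r B n) := by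
  have hc : ∀ n, MeasurableSet {z : Solenoid r | z.1 n ∈ B} := fun n =>
    ((measurable_pi_apply n).comp measurable_subtype_coe) hB
  have : wand r B n = {z : Solenoid r | z.1 n ∈ B} ∩
      ⋂ j, ⋂ (_ : n < j), {z : Solenoid r | z.1 j ∈ B}ᶜ := by
    ext z; simp [wand]
  rw [this]
  exact (hc n).inter (MeasurableSet.iInter fun j => MeasurableSet.iInter fun _ => (hc j).compl)

lemma shS_rInf_iter {X : Type*} (r : X → X) (k : ℕ) (z : Solenoid r) :
    (shS r)^[k] ((rInf r)^[k] z) = z :=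
  Function.LeftInverse.iterate (shS_rInf r) k z

lemma satur_inter {X : Type*} (r : X → X) (B : Set X) (n : ℕ) (V : Set (Solenoid r))
    (hV : V ⊆ wand r B n) (z : Solenoid r) (hz : z ∈ wand r B n) (hz2 : z ∈ satur r V) :
    z ∈ V := by
  obtain ⟨k, hk | hk⟩ := hz2
  · rcases Nat.eq_zero_or_pos k with rfl | hpos
    · exact hk
    · exfalso
      refine (hV hk).2 (n + k) (by omega) ?_
      rw [← shS_iter, shS_rInf_iter]
      exact hz.1
  · rcases Nat.eq_zero_or_pos k with rfl | hpos
    · exact hk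
    · exfalso
      refine hz.2 (n + k) (by omega) ?_
      rw [← shS_iter]
      exact (hV hk).1

/-- Under the hypotheses of the main theorem, the shift `r_∞` on the solenoid is **not**
ergodic with respect to the path-space measure `μ_∞`: there is a measurable set `A` which is
invariant up to null sets and has measure strictly between `0` and `μ_∞(X_∞)`. -/
theorem shift_not_ergodic_on_solenoid
    {X : Type*} [MetricSpace X] [CompactSpace X] [MeasurableSpace X] [BorelSpace X]
    (r : X → X) (hr : Measurable r) (hsurj : Function.Surjective r)
    (hfin : ∀ x : X, (r ⁻¹' {x}).Finite)
    (μ : Measure X) [IsProbabilityMeasure μ] (hinv : StronglyInvariant r μ)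
    (herg : Ergodic r μ)
    (m0 : X → ℂ) (hm0 : BddMeasC m0) (hqmf : IsQMF r μ m0)
    (hne1 : ¬ (∀ᵐ x ∂μ, ‖m0 x‖ = 1))
    (hns : μ {x | m0 x = 0} = 0)
    (hlog : Integrable (fun x => Real.log (‖m0 x‖ ^ 2)) μ)
    (ν : Measure (Solenoid r)) (hν : IsPathMeasure r μ m0 ν) :
    ∃ A : Set (Solenoid r), MeasurableSet A ∧
      ν (symmDiff A (rInf r ⁻¹' A)) = 0 ∧
      0 < ν A ∧ ν A < ν Set.univ := by
  set w : X → ℝ := fun x => ‖m0 x‖ ^ 2 with hw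
  obtain ⟨hm0m, C0, hC0⟩ := hm0
  have hwm : Measurable w := hm0m.norm.pow_const 2
  have hw0 : ∀ x, 0 ≤ w x := fun x => sq_nonneg _
  have hwC : ∀ x, w x ≤ C0 ^ 2 := fun x => by
    have := hC0 x
    simp only [hw]
    gcongr
  have hq : ∀ᵐ x ∂μ, EOp r w x = 1 := hqmf
  have hνfin : IsFiniteMeasure ν := by
    have h := hν 0 (fun _ => 1) measurable_const ⟨1, by simp⟩
    have h2 := pathSum_eq r hfin w (fun _ => 1) 0
    have h3 : ∫ z : Solenoid r, (1:ℝ) ∂ν = 1 := by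
      rw [h]
      calc _ = ∫ x : X, (1:ℝ) ∂μ := by
            congr 1; ext x; exact h2 x
        _ = 1 := by simp
    constructor
    rw [lt_top_iff_ne_top]
    intro htop
    simp [measureReal_def, htop] at h3
  have hmarg := marginal r hr hsurj hfin μ hinv m0 hwm (C0 ^ 2) hwC hq ν hν
  have hwi : Integrable w μ := Integrable.of_bound hwm.aestronglyMeasurable (C0 ^ 2)
    (Eventually.of_forall fun x => by
      rw [Real.norm_eq_abs, abs_of_nonneg (hw0 x)]; exact hwC x)
  have hw1 : ∫ x, w x ∂μ = 1 := by
    rw [hinv w hwm ⟨C0 ^ 2, fun x => by rw [abs_of_nonneg (hw0 x)]; exact hwC x⟩]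
    have h1 : ∫ x, EOp r w x ∂μ = 1 := by
      rw [integral_congr_ae hq]
      simp
    exact h1
  have hne : ¬ ∀ᵐ x ∂μ, w x = 1 := by
    intro h
    apply hne1
    filter_upwards [h] with x hx
    exact (pow_eq_one_iff_of_nonneg (norm_nonneg _) two_ne_zero).1 hx
  have hpos : ∀ᵐ x ∂μ, 0 < w x := by
    filter_upwards [measure_eq_zero_iff_ae_notMem.1 hns] with x hx
    have : m0 x ≠ 0 := hx
    simp only [hw]
    positivity
  have hsum := coc_summable r μ herg w hwm hw0 hlog (log_neg μ w hwi hpos hw1 hne hlog)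
  set F : X → ENNReal := fun x => ∑' n, ENNReal.ofReal (coc r w n x) with hF
  have hFm : Measurable F := Measurable.ennreal_tsum fun n =>
    (coc_meas r hr w hwm n).ennreal_ofReal
  have hFfin : ∀ᵐ x ∂μ, F x ≠ ⊤ := by
    filter_upwards [hsum] with x hx
    exact hx.tsum_ofReal_ne_top
  obtain ⟨K, hK⟩ : ∃ K : ℕ, μ {x | F x ≤ K} ≠ 0 := by
    by_contra hcon
    push Not at hcon
    have h1 : ∀ᵐ x ∂μ, ∀ K : ℕ, ¬ (F x ≤ K) :=
      ae_all_iff.2 fun K => measure_eq_zero_iff_ae_notMem.1 (hcon K)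
    have h2 : ∀ᵐ x ∂μ, False := by
      filter_upwards [h1, hFfin] with x hx hx2
      obtain ⟨n, hn⟩ := ENNReal.exists_nat_gt hx2
      exact hx n hn.le
    have := h2.exists
    obtain ⟨_, h⟩ := this
    exact h
  set B : Set X := {x | F x ≤ K} with hB
  have hBm : MeasurableSet B := measurableSet_le hFm measurable_const
  have hm0' : ν {z | z.1 0 ∈ B} = μ B := by
    rw [hmarg 0 B hBm]; simp [coc]
  have hsumB : ∑' n, ν {z | z.1 n ∈ B} ≠ ⊤ := by
    have : ∑' n, ν {z : Solenoid r | z.1 n ∈ B} = ∫⁻ x in B, F x ∂μ := by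
      rw [lintegral_tsum fun n => (coc_meas r hr w hwm n).ennreal_ofReal.aemeasurable]
      exact tsum_congr fun n => hmarg n B hBm
    rw [this]
    have h2 : ∫⁻ x in B, F x ∂μ ≤ ∫⁻ x in B, (K : ENNReal) ∂μ :=
      setLIntegral_mono measurable_const fun x hx => hx
    refine ne_top_of_le_ne_top ?_ h2
    rw [lintegral_const]
    exact ENNReal.mul_ne_top (ENNReal.natCast_ne_top K) (measure_ne_top _ _)
  have hBC := measure_setOf_frequently_eq_zero hsumB
  have hcov : ∀ᵐ z ∂ν, z.1 0 ∈ B → ∃ n, z ∈ wand r B n := by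
    filter_upwards [measure_eq_zero_iff_ae_notMem.1 hBC] with z hz hz0
    have hz' : ¬ ∃ᶠ n in atTop, z.1 n ∈ B := hz
    rw [not_frequently, eventually_atTop] at hz'
    obtain ⟨N, hN⟩ := hz'
    classical
    set m := Nat.findGreatest (fun n => z.1 n ∈ B) N with hm
    refine ⟨m, Nat.findGreatest_spec (P := fun n => z.1 n ∈ B) (Nat.zero_le N) hz0, ?_⟩
    intro j hj hjB
    rcases le_or_gt N j with h | h
    · exact hN j h hjB
    · exact Nat.findGreatest_is_greatest hj h.le hjB
  obtain ⟨n, hn⟩ : ∃ n, ν (wand r B n) ≠ 0 := by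
    by_contra hcon
    push Not at hcon
    have h1 : ∀ᵐ z ∂ν, ∀ n, z ∉ wand r B n :=
      ae_all_iff.2 fun n => measure_eq_zero_iff_ae_notMem.1 (hcon n)
    apply hK
    rw [← hm0', measure_eq_zero_iff_ae_notMem]
    filter_upwards [h1, hcov] with z h2 h3 h4
    obtain ⟨n, hn⟩ := h3 h4
    exact h2 n hn
  by_contra hno
  push Not at hno
  have hdich : ∀ U : Set X, MeasurableSet U →
      (∀ᵐ z ∂(ν.restrict (wand r B n)), z.1 0 ∈ U) ∨
      (∀ᵐ z ∂(ν.restrict (wand r B n)), z.1 0 ∉ U) := by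
    intro U hU
    have hWm := wand_meas r B hBm n
    set V : Set (Solenoid r) := wand r B n ∩ {z | z.1 0 ∈ U} with hV
    have hVm : MeasurableSet V := hWm.inter
      (((measurable_pi_apply 0).comp measurable_subtype_coe) hU)
    by_cases hV0 : ν V = 0
    · right
      rw [ae_restrict_iff' hWm]
      filter_upwards [measure_eq_zero_iff_ae_notMem.1 hV0] with z hz hzW hzU
      exact hz ⟨hzW, hzU⟩
    · left
      have hAm := satur_meas r hr V hVm
      have hle := hno (satur r V) hAm (by rw [satur_inv]; simp)
        (lt_of_lt_of_le (pos_iff_ne_zero.2 hV0) (measure_mono fun z hz => ⟨0, Or.inl hz⟩))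
      have hc0 : ν (satur r V)ᶜ = 0 := by
        rw [measure_compl hAm (measure_ne_top _ _)]
        exact tsub_eq_zero_of_le hle
      rw [ae_restrict_iff' hWm]
      filter_upwards [measure_eq_zero_iff_ae_notMem.1 hc0] with z hz hzW
      have hzA : z ∈ satur r V := by simpa using hz
      exact (satur_inter r B n V Set.inter_subset_left z hzW hzA).2
  have hneX : Nonempty X := by
    by_contra h
    rw [not_nonempty_iff] at h
    exact hK (by rw [Set.eq_empty_of_isEmpty B]; simp)
  obtain ⟨c, hc⟩ := Filter.exists_eventuallyEq_const_of_forall_separating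
    (l := ae (ν.restrict (wand r B n))) (f := fun z : Solenoid r => z.1 0) MeasurableSet hdich
  refine hne (atom_case r hsurj hfin μ hinv herg w hq c ?_)
  have h1 : ν {z | z.1 0 ∈ ({c} : Set X)} = μ {c} := by
    rw [hmarg 0 {c} (measurableSet_singleton c)]; simp [coc]
  rw [← h1]
  intro h0
  apply hn
  rw [measure_eq_zero_iff_ae_notMem] at h0 ⊢
  rw [EventuallyEq, ae_restrict_iff' (wand_meas r B hBm n)] at hc
  filter_upwards [h0, hc] with z hz1 hz2 hz3
  exact hz1 (hz2 hz3)
end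
end

section
/- Let X be a compact metric space, r : X → X a Borel measurable, onto, finite-to-one map, μ a strongly invariant Borel probability measure with respect to which r is ergodic, and m0 ∈ L∞(X) a non-singular QMF filter with |m0| not μ-a.e. equal to 1 and log|m0|² ∈ L¹(X,μ). Then the transfer operator R_{m0}, defined by (R_{m0} f)(x) = (1/#r⁻¹(x)) Σ_{r(y)=x} |m0(y)|² f(y) for f ∈ L∞(X), has a fixed point which is a bounded measurable function that is not μ-a.e. constant: there exists f ∈ L∞(X,μ), f not a.e. equal to a constant, with R_{m0} f = f μ-a.e. -/
open MeasureTheory Filter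

noncomputable section

set_option linter.unusedSectionVars false


section Erg
variable {X : Type*} [MeasurableSpace X]

def SS (r : X → X) (h : X → ℝ) : ℕ → X → ℝ
  | 0 => fun _ => 0
  | n+1 => fun x => h x + SS r h n (r x)

def MM (r : X → X) (h : X → ℝ) : ℕ → X → ℝ
  | 0 => fun _ => 0
  | n+1 => fun x => max 0 (h x + MM r h n (r x))

lemma MM_nonneg (r : X → X) (h : X → ℝ) (n : ℕ) (x : X) : 0 ≤ MM r h n x := by
  cases n with
  | zero => simp [MM]
  | succ n => exact le_max_left _ _

lemma MM_mono (r : X → X) (h : X → ℝ) (n : ℕ) : ∀ x, MM r h n x ≤ MM r h (n+1) x := by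
  induction n with
  | zero => intro x; exact MM_nonneg r h 1 x
  | succ n ih =>
    intro x
    have := ih (r x)
    show max 0 (h x + MM r h n (r x)) ≤ max 0 (h x + MM r h (n+1) (r x))
    gcongr

lemma SS_le_MM (r : X → X) (h : X → ℝ) (n : ℕ) : ∀ x, SS r h n x ≤ MM r h n x := by
  induction n with
  | zero => intro x; simp [SS, MM]
  | succ n ih =>
    intro x
    have := ih (r x)
    show h x + SS r h n (r x) ≤ max 0 (h x + MM r h n (r x))
    exact le_max_of_le_right (by linarith)

lemma SS_meas {r : X → X} {h : X → ℝ} (hr : Measurable r) (hh : Measurable h) (n : ℕ) :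
    Measurable (SS r h n) := by
  induction n with
  | zero => exact measurable_const
  | succ n ih => exact hh.add (ih.comp hr)

lemma MM_int {r : X → X} {h : X → ℝ} {μ : Measure X} [IsProbabilityMeasure μ]
    (hr : MeasurePreserving r μ μ) (hh : Integrable h μ) (n : ℕ) :
    Integrable (MM r h n) μ := by
  induction n with
  | zero => exact integrable_zero _ _ _
  | succ n ih =>
    have h2 : Integrable (fun x => MM r h n (r x)) μ := hr.integrable_comp_of_integrable ih
    exact (integrable_zero X ℝ μ).sup (hh.add h2)

lemma SS_bdd {r : X → X} {h : X → ℝ} {μ : Measure X} [IsProbabilityMeasure μ]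
    (herg : Ergodic r μ) (hm : Measurable h) (hh : Integrable h μ) (hneg : ∫ x, h x ∂μ < 0) :
    ∀ᵐ x ∂μ, ∃ N : ℕ, ∀ n, SS r h n x ≤ N := by
  have hr := herg.toMeasurePreserving
  set D : Set X := {x | ∃ N : ℕ, ∀ n, SS r h n x ≤ N} with hD
  have hDm : MeasurableSet D := by
    have : D = ⋃ N : ℕ, ⋂ n, {x | SS r h n x ≤ N} := by ext x; simp [hD]
    rw [this]
    exact MeasurableSet.iUnion fun N => MeasurableSet.iInter fun n =>
      measurableSet_le (SS_meas hr.measurable hm n) measurable_const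
  have hDi : r ⁻¹' D = D := by
    ext x
    simp only [hD, Set.mem_preimage, Set.mem_ofPred_eq]
    constructor
    · rintro ⟨N, hN⟩
      obtain ⟨K, hK⟩ := exists_nat_ge (max 0 (h x + N))
      refine ⟨K, fun n => ?_⟩
      cases n with
      | zero => simp [SS]
      | succ n =>
        show h x + SS r h n (r x) ≤ K
        have := hN n
        have := le_max_right 0 (h x + N)
        linarith
    · rintro ⟨N, hN⟩
      obtain ⟨K, hK⟩ := exists_nat_ge (N - h x)
      refine ⟨K, fun n => ?_⟩
      have : h x + SS r h n (r x) ≤ N := hN (n+1)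
      linarith
  rcases herg.toPreErgodic.ae_mem_or_ae_notMem hDm hDi with h1 | h1
  · exact h1
  exfalso
  have h2 : ∀ᵐ x ∂μ, r x ∉ D := by
    filter_upwards [h1] with x hx
    have : x ∉ r ⁻¹' D := by rw [hDi]; exact hx
    exact this
  have lim : Tendsto (fun n => ∫ x, max (- MM r h n (r x)) (h x) ∂μ) atTop (nhds (∫ x, h x ∂μ)) := by
    refine tendsto_integral_of_dominated_convergence (fun x => |h x|) ?_ hh.abs ?_ ?_
    · intro n
      have h2 : Integrable (fun x => MM r h n (r x)) μ :=
        hr.integrable_comp_of_integrable (MM_int hr hh n)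
      exact (h2.neg.sup hh).aestronglyMeasurable
    · intro n
      filter_upwards with x
      have := MM_nonneg r h n (r x)
      rw [Real.norm_eq_abs, abs_le]
      refine ⟨le_max_of_le_right (neg_abs_le _), max_le ?_ (le_abs_self _)⟩
      have := abs_nonneg (h x)
      linarith
    · filter_upwards [h2] with x hx
      simp only [hD, Set.mem_ofPred_eq, not_exists, not_forall, not_le] at hx
      obtain ⟨N, hN⟩ := exists_nat_ge (- h x)
      obtain ⟨n, hn⟩ := hx N
      refine tendsto_const_nhds.congr' ?_
      filter_upwards [eventually_ge_atTop n] with k hk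
      have hmon : Monotone (fun n => MM r h n (r x)) := monotone_nat_of_le_succ fun n => MM_mono r h n _
      have h3 : MM r h n (r x) ≤ MM r h k (r x) := hmon hk
      have h4 := SS_le_MM r h n (r x)
      rw [max_eq_right]
      linarith
  have nonneg : ∀ n, 0 ≤ ∫ x, max (- MM r h n (r x)) (h x) ∂μ := by
    intro n
    have i1 : Integrable (fun x => MM r h n (r x)) μ :=
        hr.integrable_comp_of_integrable (MM_int hr hh n)
    have e1 : ∫ x, MM r h n (r x) ∂μ = ∫ x, MM r h n x ∂μ := by
      have := integral_map (μ := μ) (φ := r) hr.measurable.aemeasurable (f := MM r h n)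
        (by rw [hr.map_eq]; exact (MM_int hr hh n).aestronglyMeasurable)
      rw [hr.map_eq] at this
      exact this.symm
    have e2 : ∀ x, max (- MM r h n (r x)) (h x) = MM r h (n+1) x - MM r h n (r x) := by
      intro x
      show _ = max 0 (h x + MM r h n (r x)) - MM r h n (r x)
      rw [← max_sub_sub_right]
      simp
    simp_rw [e2]
    rw [integral_sub (MM_int hr hh (n+1)) i1, e1, sub_nonneg]
    exact integral_mono (MM_int hr hh n) (MM_int hr hh (n+1)) (MM_mono r h n)
  have := ge_of_tendsto' lim nonneg
  linarith

def WW (r : X → X) (m : X → ℝ) : ℕ → X → ℝ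
  | 0 => fun _ => 1
  | n+1 => fun x => m x * WW r m n (r x)

lemma WW_eq (r : X → X) (m : X → ℝ) (e : ℝ) (n : ℕ) : ∀ x, (∀ k, 0 < m (r^[k] x)) →
    WW r m n x = Real.exp (SS r (fun x => Real.log (m x) + e) n x - n * e) := by
  induction n with
  | zero => intro x _; simp [WW, SS]
  | succ n ih =>
    intro x hx
    have h0 := hx 0
    simp only [Function.iterate_zero, id] at h0
    simp only [WW, SS]
    rw [ih (r x) (fun k => by simpa using hx (k+1))]
    nth_rewrite 1 [← Real.exp_log h0]
    rw [← Real.exp_add]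
    congr 1
    push_cast
    ring

lemma WW_summable {r : X → X} {m : X → ℝ} {μ : Measure X} [IsProbabilityMeasure μ]
    (herg : Ergodic r μ) (hm : Measurable m) (hpos : ∀ᵐ x ∂μ, 0 < m x)
    (hint : Integrable m μ) (hlog : Integrable (fun x => Real.log (m x)) μ)
    (h1 : ∫ x, m x ∂μ = 1) (hne : ¬ ∀ᵐ x ∂μ, m x = 1) :
    ∀ᵐ x ∂μ, (∀ k, 0 < m (r^[k] x)) ∧ Summable (fun n => WW r m n x) := by
  have hr := herg.toMeasurePreserving
  have hneg : ∫ x, Real.log (m x) ∂μ < 0 := by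
    have hi1 : Integrable (fun x => m x - 1) μ := hint.sub (integrable_const 1)
    have hi : Integrable (fun x => m x - 1 - Real.log (m x)) μ := hi1.sub hlog
    have h0 : 0 ≤ᵐ[μ] fun x => m x - 1 - Real.log (m x) := by
      filter_upwards [hpos] with x hx
      have := Real.log_le_sub_one_of_pos hx
      simp only [Pi.zero_apply]; linarith
    have hI : ∫ x, (m x - 1 - Real.log (m x)) ∂μ = - ∫ x, Real.log (m x) ∂μ := by
      rw [integral_sub hi1 hlog, integral_sub hint (integrable_const 1)]
      simp [h1]
    have hge := integral_nonneg_of_ae h0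
    rw [hI] at hge
    rcases hge.lt_or_eq with h | h
    · linarith
    · exfalso
      rw [← hI] at h
      have := (integral_eq_zero_iff_of_nonneg_ae h0 hi).1 h.symm
      apply hne
      filter_upwards [this, hpos] with x hx hp
      by_contra hc
      have := Real.log_lt_sub_one_of_pos hp hc
      simp only [Pi.zero_apply] at hx
      linarith
  set e : ℝ := -(∫ x, Real.log (m x) ∂μ) / 2 with he
  have hepos : 0 < e := by rw [he]; linarith
  have hb := SS_bdd (h := fun x => Real.log (m x) + e) herg
    ((Real.measurable_log.comp hm).add measurable_const) (hlog.add (integrable_const e))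
    (by rw [integral_add hlog (integrable_const e)]; simp; linarith)
  have hall : ∀ᵐ x ∂μ, ∀ k, 0 < m (r^[k] x) := by
    rw [ae_all_iff]
    intro k
    exact (hr.iterate k).quasiMeasurePreserving.ae hpos
  filter_upwards [hb, hall] with x ⟨N, hN⟩ hx
  refine ⟨hx, ?_⟩
  have hg : Summable (fun n : ℕ => Real.exp N * (Real.exp (-e)) ^ n) :=
    (summable_geometric_of_lt_one (Real.exp_pos _).le (by rw [Real.exp_lt_one_iff]; linarith)).mul_left _
  refine Summable.of_nonneg_of_le (fun n => ?_) (fun n => ?_) hg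
  · rw [WW_eq r m e n x hx]; positivity
  · rw [WW_eq r m e n x hx, ← Real.exp_nat_mul, ← Real.exp_add]
    apply Real.exp_le_exp.2
    have := hN n
    linarith

lemma ae_summable_aux {μ : Measure X} (F : ℕ → X → ℝ) (hF : ∀ n, Integrable (F n) μ)
    (h0 : ∀ n, 0 ≤ᵐ[μ] F n) (hs : Summable fun n => ∫ x, F n x ∂μ) :
    (∀ᵐ x ∂μ, Summable fun n => F n x) ∧ Integrable (fun x => ∑' n, F n x) μ := by
  have h1 : ∫⁻ x, ∑' n, ENNReal.ofReal (F n x) ∂μ ≠ ⊤ := by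
    rw [lintegral_tsum (fun n => (hF n).aemeasurable.ennreal_ofReal)]
    simp_rw [← ofReal_integral_eq_lintegral_ofReal (hF _) (h0 _)]
    exact hs.tsum_ofReal_ne_top
  have hm : AEMeasurable (fun x => ∑' n, ENNReal.ofReal (F n x)) μ := AEMeasurable.tsum (fun n => (hF n).aemeasurable.ennreal_ofReal)
  have h2 := ae_lt_top' hm h1
  constructor
  swap
  · refine (integrable_toReal_of_lintegral_ne_top hm h1).congr ?_
    filter_upwards [ae_all_iff.2 h0] with x hx0
    rw [ENNReal.tsum_toReal_eq (fun n => ENNReal.ofReal_ne_top)]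
    exact tsum_congr fun n => ENNReal.toReal_ofReal (hx0 n)
  filter_upwards [h2, ae_all_iff.2 h0] with x hx hx0
  have := ENNReal.summable_toReal hx.ne
  refine this.congr (fun n => ?_)
  exact (ENNReal.toReal_ofReal (hx0 n))
end Erg

section Tr
variable {X : Type*} [MeasurableSpace X]

def Avg (fib : X → Finset X) (f : X → ℝ) (x : X) : ℝ := ((fib x).card : ℝ)⁻¹ * ∑ y ∈ fib x, f y

def RR (fib : X → Finset X) (m : X → ℝ) (f : X → ℝ) : X → ℝ := Avg fib (fun y => m y * f y)

def Gd (μ : Measure X) (f : X → ℝ) : Prop := AEMeasurable f μ ∧ ∃ C, ∀ᵐ x ∂μ, |f x| ≤ C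

/-- Packaged hypotheses. -/
structure Hyp (r : X → X) (μ : Measure X) (fib : X → Finset X) (m : X → ℝ) : Prop where
  hr : MeasurePreserving r μ μ
  hfib : ∀ x y, y ∈ fib x ↔ r y = x
  hne : ∀ x, (fib x).Nonempty
  hI : ∀ f : X → ℝ, Measurable f → (∃ C, ∀ x, |f x| ≤ C) → ∫ x, f x ∂μ = ∫ x, Avg fib f x ∂μ
  hm : Measurable m
  hm0 : ∀ x, 0 ≤ m x
  hmC : ∃ C, ∀ x, |m x| ≤ C
  hq : ∀ᵐ x ∂μ, Avg fib m x = 1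

variable {r : X → X} {μ : Measure X} [IsProbabilityMeasure μ] {fib : X → Finset X} {m : X → ℝ}

lemma Gd.int {f : X → ℝ} (h : Gd μ f) : Integrable f μ := by
  obtain ⟨h1, C, hC⟩ := h
  exact Integrable.of_bound h1.aestronglyMeasurable C hC

lemma Gd.mul {f g : X → ℝ} (h : Gd μ f) (h' : Gd μ g) : Gd μ (fun x => f x * g x) := by
  obtain ⟨h1, C, hC⟩ := h
  obtain ⟨h1', C', hC'⟩ := h'
  refine ⟨h1.mul h1', C * C', ?_⟩
  filter_upwards [hC, hC'] with x a b
  rw [abs_mul]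
  exact mul_le_mul a b (abs_nonneg _) ((abs_nonneg _).trans a)

lemma Gd.comp {f : X → ℝ} (h : Gd μ f) (hr : MeasurePreserving r μ μ) :
    Gd μ (fun x => f (r x)) := by
  obtain ⟨h1, C, hC⟩ := h
  exact ⟨h1.comp_quasiMeasurePreserving hr.quasiMeasurePreserving, C, hr.quasiMeasurePreserving.ae hC⟩

lemma Hyp.avg_add_const (H : Hyp r μ fib m) (f : X → ℝ) (c : ℝ) (x : X) :
    Avg fib (fun y => f y + c) x = Avg fib f x + c := by
  have : ((fib x).card : ℝ) ≠ 0 := by exact_mod_cast (H.hne x).card_pos.ne'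
  simp only [Avg, Finset.sum_add_distrib, Finset.sum_const, nsmul_eq_mul]
  field_simp

lemma Hyp.avg_int0 (H : Hyp r μ fib m) {f : X → ℝ} (hf : Measurable f) (hC : ∃ C, ∀ x, |f x| ≤ C) :
    Integrable (Avg fib f) μ := by
  obtain ⟨C, hC⟩ := hC
  have hfi : Integrable f μ := Integrable.of_bound hf.aestronglyMeasurable C (ae_of_all _ hC)
  have h := H.hI (fun y => f y + (C + 1)) (hf.add measurable_const) ⟨C + |C + 1|, fun x =>
    (abs_add_le _ _).trans (by have := hC x; linarith)⟩
  have h1 : 1 ≤ ∫ x, (f x + (C + 1)) ∂μ := by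
    have : ∫ x, (1 : ℝ) ∂μ ≤ ∫ x, (f x + (C + 1)) ∂μ := by
      refine integral_mono (integrable_const _) (hfi.add (integrable_const _)) (fun x => ?_)
      have := (abs_le.1 (hC x)).1
      show (1 : ℝ) ≤ f x + (C + 1)
      linarith
    simpa using this
  have h2 : Integrable (fun x => Avg fib (fun y => f y + (C + 1)) x) μ :=
    Integrable.of_integral_ne_zero (by rw [← h]; linarith)
  have h3 := h2.sub (integrable_const (C + 1))
  refine h3.congr (ae_of_all _ fun x => ?_)
  simp [H.avg_add_const]

lemma Hyp.lift (H : Hyp r μ fib m) {P : X → Prop} (hP : ∀ᵐ y ∂μ, P y) :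
    ∀ᵐ x ∂μ, ∀ y ∈ fib x, P y := by
  obtain ⟨N, hN, hNm, hN0⟩ := exists_measurable_superset_of_null (ae_iff.1 hP)
  have hmeas : Measurable (N.indicator (fun _ => (1 : ℝ))) := measurable_const.indicator hNm
  have hb : ∃ C, ∀ x, |N.indicator (fun _ => (1 : ℝ)) x| ≤ C := by
    refine ⟨1, fun x => ?_⟩
    by_cases h : x ∈ N <;> simp [h]
  have hi := H.avg_int0 hmeas hb
  have h := H.hI _ hmeas hb
  rw [integral_indicator hNm] at h
  have h0 : ∫ x, Avg fib (N.indicator (fun _ => (1 : ℝ))) x ∂μ = 0 := by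
    rw [← h, Measure.restrict_eq_zero.2 hN0]; simp
  have hnn : ∀ y, 0 ≤ N.indicator (fun _ => (1 : ℝ)) y := fun y =>
    Set.indicator_nonneg (fun _ _ => zero_le_one) y
  have h1 := (integral_eq_zero_iff_of_nonneg
    (fun x => mul_nonneg (by positivity) (Finset.sum_nonneg fun y _ => hnn y)) hi).1 h0
  filter_upwards [h1] with x hx y hy
  have hc : ((fib x).card : ℝ)⁻¹ ≠ 0 := inv_ne_zero (by exact_mod_cast (H.hne x).card_pos.ne')
  have h2 : ∑ y ∈ fib x, N.indicator (fun _ => (1 : ℝ)) y = 0 :=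
    (mul_eq_zero.1 hx).resolve_left hc
  have h3 := (Finset.sum_eq_zero_iff_of_nonneg (fun y _ => hnn y)).1 h2 y hy
  by_contra hPy
  have : y ∈ N := hN hPy
  simp [this] at h3

lemma Hyp.avg_gd (H : Hyp r μ fib m) {f : X → ℝ} (hf : Gd μ f) :
    Gd μ (Avg fib f) ∧ ∫ x, Avg fib f x ∂μ = ∫ x, f x ∂μ := by
  obtain ⟨h1, C, hC⟩ := hf
  let g : X → ℝ := fun x => max (-C) (min C (h1.mk f x))
  have hg : Measurable g := measurable_const.max (measurable_const.min h1.measurable_mk)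
  have hfg : ∀ᵐ x ∂μ, f x = g x := by
    filter_upwards [h1.ae_eq_mk, hC] with x hx hxC
    rw [abs_le] at hxC
    simp only [g]
    rw [← hx, min_eq_right hxC.2, max_eq_right hxC.1]
  have hgC : ∃ C, ∀ x, |g x| ≤ C := by
    refine ⟨|C|, fun x => ?_⟩
    rw [abs_le]
    refine ⟨le_max_of_le_left (by have := le_abs_self C; linarith), max_le (neg_le_abs C)
      (min_le_of_left_le (le_abs_self C))⟩
  have hae : ∀ᵐ x ∂μ, Avg fib g x = Avg fib f x := by
    filter_upwards [H.lift hfg] with x hx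
    simp only [Avg]
    rw [Finset.sum_congr rfl hx]
  refine ⟨⟨(H.avg_int0 hg hgC).aemeasurable.congr hae, C, ?_⟩, ?_⟩
  · filter_upwards [H.lift hC] with x hx
    have : (0 : ℝ) < (fib x).card := by exact_mod_cast (H.hne x).card_pos
    rw [Avg, abs_mul, abs_of_pos (inv_pos.2 this), inv_mul_le_iff₀ this]
    refine (Finset.abs_sum_le_sum_abs _ _).trans ((Finset.sum_le_card_nsmul _ _ C hx).trans ?_)
    simp
  · rw [integral_congr_ae hfg, H.hI g hg hgC, integral_congr_ae hae]

lemma Hyp.gm (H : Hyp r μ fib m) : Gd μ m :=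
  ⟨H.hm.aemeasurable, H.hmC.imp fun _ h => ae_of_all _ h⟩

lemma Hyp.rr_gd (H : Hyp r μ fib m) {f : X → ℝ} (hf : Gd μ f) : Gd μ (RR fib m f) :=
  (H.avg_gd (H.gm.mul hf)).1

lemma Hyp.rr_int (H : Hyp r μ fib m) {f : X → ℝ} (hf : Gd μ f) :
    ∫ x, RR fib m f x ∂μ = ∫ x, m x * f x ∂μ :=
  (H.avg_gd (H.gm.mul hf)).2

lemma Hyp.it_gd (H : Hyp r μ fib m) (n : ℕ) : ∀ {f : X → ℝ}, Gd μ f → Gd μ ((RR fib m)^[n] f) := by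
  induction n with
  | zero => intro f hf; exact hf
  | succ n ih => intro f hf; exact ih (H.rr_gd hf)

lemma RR_add (f g : X → ℝ) (x : X) :
    RR fib m (fun y => f y + g y) x = RR fib m f x + RR fib m g x := by
  simp only [RR, Avg, mul_add, Finset.sum_add_distrib]

lemma RR_sub (f g : X → ℝ) (x : X) :
    RR fib m (fun y => f y - g y) x = RR fib m f x - RR fib m g x := by
  simp only [RR, Avg, mul_sub, Finset.sum_sub_distrib]

lemma Hyp.rr_mul (H : Hyp r μ fib m) (f h : X → ℝ) (x : X) :
    RR fib m (fun y => h (r y) * f y) x = h x * RR fib m f x := by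
  simp only [RR, Avg, Finset.mul_sum]
  refine Finset.sum_congr rfl fun y hy => ?_
  rw [(H.hfib x y).1 hy]
  ring

lemma Hyp.rr_one (H : Hyp r μ fib m) : ∀ᵐ x ∂μ, RR fib m (fun _ => 1) x = 1 := by
  filter_upwards [H.hq] with x hx
  simpa [RR] using hx

lemma Hyp.rr_mono (H : Hyp r μ fib m) {f g : X → ℝ} (h : ∀ᵐ x ∂μ, f x ≤ g x) :
    ∀ᵐ x ∂μ, RR fib m f x ≤ RR fib m g x := by
  filter_upwards [H.lift h] with x hx
  exact mul_le_mul_of_nonneg_left (Finset.sum_le_sum fun y hy =>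
    mul_le_mul_of_nonneg_left (hx y hy) (H.hm0 y)) (by positivity)

lemma Hyp.rr_congr (H : Hyp r μ fib m) {f g : X → ℝ} (h : ∀ᵐ x ∂μ, f x = g x) :
    ∀ᵐ x ∂μ, RR fib m f x = RR fib m g x := by
  filter_upwards [H.rr_mono (h.mono fun x hx => hx.le), H.rr_mono (h.mono fun x hx => hx.ge)]
    with x a b using le_antisymm a b

lemma Hyp.rr_abs (H : Hyp r μ fib m) {f g w : X → ℝ} (h : ∀ᵐ x ∂μ, |f x - g x| ≤ w x) :
    ∀ᵐ x ∂μ, |RR fib m f x - RR fib m g x| ≤ RR fib m w x := by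
  filter_upwards [H.lift h] with x hx
  rw [← RR_sub]
  simp only [RR, Avg]
  rw [abs_mul, abs_of_nonneg (by positivity : (0 : ℝ) ≤ ((fib x).card : ℝ)⁻¹)]
  refine mul_le_mul_of_nonneg_left ((Finset.abs_sum_le_sum_abs _ _).trans
    (Finset.sum_le_sum fun y hy => ?_)) (by positivity)
  rw [abs_mul, abs_of_nonneg (H.hm0 y)]
  exact mul_le_mul_of_nonneg_left (hx y hy) (H.hm0 y)

lemma Hyp.rr_tendsto (H : Hyp r μ fib m) {F : ℕ → X → ℝ} {f : X → ℝ}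
    (h : ∀ᵐ x ∂μ, Tendsto (fun n => F n x) atTop (nhds (f x))) :
    ∀ᵐ x ∂μ, Tendsto (fun n => RR fib m (F n) x) atTop (nhds (RR fib m f x)) := by
  filter_upwards [H.lift h] with x hx
  exact (tendsto_finsetSum _ fun y hy => (hx y hy).const_mul _).const_mul _

lemma WW_gd (H : Hyp r μ fib m) (n : ℕ) : Gd μ (WW r m n) := by
  induction n with
  | zero => exact ⟨aemeasurable_const, 1, ae_of_all _ fun x => by simp [WW]⟩
  | succ n ih => exact H.gm.mul (ih.comp H.hr)

lemma Hyp.it_int (H : Hyp r μ fib m) (n : ℕ) : ∀ {f : X → ℝ}, Gd μ f →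
    ∫ x, (RR fib m)^[n] f x ∂μ = ∫ x, WW r m n x * f x ∂μ := by
  induction n with
  | zero => intro f hf; simp [WW]
  | succ n ih =>
    intro f hf
    rw [Function.iterate_succ_apply, ih (H.rr_gd hf)]
    simp_rw [← H.rr_mul f (WW r m n)]
    have e : ∀ f' : X → ℝ, (∫ x, RR fib m f' x ∂μ) = ∫ x, RR fib m f' x ∂μ := fun _ => rfl
    rw [H.rr_int (((WW_gd H n).comp H.hr).mul hf)]
    simp only [WW, mul_assoc]

lemma Hyp.it_mem (H : Hyp r μ fib m) {f : X → ℝ} (h : ∀ᵐ x ∂μ, 0 ≤ f x ∧ f x ≤ 1) (n : ℕ) :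
    ∀ᵐ x ∂μ, 0 ≤ (RR fib m)^[n] f x ∧ (RR fib m)^[n] f x ≤ 1 := by
  induction n with
  | zero => exact h
  | succ n ih =>
    have a := H.rr_mono (f := fun _ => 0) (ih.mono fun x hx => hx.1)
    have b := H.rr_mono (g := fun _ => 1) (ih.mono fun x hx => hx.2)
    filter_upwards [a, b, H.rr_one] with x ha hb h1
    rw [Function.iterate_succ_apply']
    rw [h1] at hb
    refine ⟨?_, hb⟩
    simpa [RR, Avg] using ha
end Tr

section Harm
variable {X : Type*} [MeasurableSpace X]

def Phi (r : X → X) (m : X → ℝ) (g : X → ℝ) (x : X) : ℝ := ∑' n, WW r m n x * g (r^[n] x)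

def VV (r : X → X) (m : X → ℝ) (x : X) : ℝ := (Phi r m (fun _ => 1) x)⁻¹

def UU (r : X → X) (m : X → ℝ) (g : X → ℝ) (x : X) : ℝ := Phi r m g x * VV r m x

def TT (r : X → X) (fib : X → Finset X) (m : X → ℝ) (n : ℕ) (x : X) : ℝ :=
  ∑ k ∈ Finset.range n, (RR fib m)^[k+1] (VV r m) x

variable {r : X → X} {μ : Measure X} [IsProbabilityMeasure μ] {fib : X → Finset X} {m : X → ℝ}

lemma WW_nonneg (hm0 : ∀ x, 0 ≤ m x) (n : ℕ) : ∀ x, 0 ≤ WW r m n x := by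
  induction n with
  | zero => intro x; simp [WW]
  | succ n ih => intro x; exact mul_nonneg (hm0 x) (ih _)

lemma Phi_sum (hm0 : ∀ x, 0 ≤ m x) {g : X → ℝ} (hg : ∀ x, 0 ≤ g x ∧ g x ≤ 1) {x : X}
    (hs : Summable fun n => WW r m n x) : Summable fun n => WW r m n x * g (r^[n] x) :=
  Summable.of_nonneg_of_le (fun n => mul_nonneg (WW_nonneg hm0 n x) (hg _).1)
    (fun n => mul_le_of_le_one_right (WW_nonneg hm0 n x) (hg _).2) hs

lemma Phi_rec (hm0 : ∀ x, 0 ≤ m x) {g : X → ℝ} (hg : ∀ x, 0 ≤ g x ∧ g x ≤ 1) {x : X}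
    (hs : Summable fun n => WW r m n x) :
    Phi r m g x = g x + m x * Phi r m g (r x) := by
  rw [Phi, (Phi_sum hm0 hg hs).tsum_eq_zero_add, Phi, ← tsum_mul_left]
  simp [WW, mul_assoc]

lemma Phi_nonneg (hm0 : ∀ x, 0 ≤ m x) {g : X → ℝ} (hg : ∀ x, 0 ≤ g x ∧ g x ≤ 1) (x : X) :
    0 ≤ Phi r m g x := tsum_nonneg fun n => mul_nonneg (WW_nonneg hm0 n x) (hg _).1

lemma Phi_le (hm0 : ∀ x, 0 ≤ m x) {g : X → ℝ} (hg : ∀ x, 0 ≤ g x ∧ g x ≤ 1) {x : X}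
    (hs : Summable fun n => WW r m n x) : Phi r m g x ≤ Phi r m (fun _ => 1) x := by
  refine (Phi_sum hm0 hg hs).tsum_le_tsum (fun n => ?_) (Phi_sum (g := fun _ => 1) hm0 (by simp) hs)
  exact mul_le_mul_of_nonneg_left (hg (r^[n] x)).2 (WW_nonneg hm0 n x)

lemma Phi_one_ge (hm0 : ∀ x, 0 ≤ m x) {x : X}
    (hs : Summable fun n => WW r m n x) : 1 ≤ Phi r m (fun _ => 1) x := by
  rw [Phi_rec hm0 (by simp) hs]
  have := Phi_nonneg (r := r) hm0 (g := fun _ => 1) (by simp) (r x)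
  have := mul_nonneg (hm0 x) this
  linarith

lemma VV_mem (hm0 : ∀ x, 0 ≤ m x) {x : X}
    (hs : Summable fun n => WW r m n x) : 0 < VV r m x ∧ VV r m x ≤ 1 := by
  have := Phi_one_ge (r := r) hm0 hs
  exact ⟨inv_pos.2 (by linarith), inv_le_one_of_one_le₀ this⟩

lemma UU_mem (hm0 : ∀ x, 0 ≤ m x) {g : X → ℝ} (hg : ∀ x, 0 ≤ g x ∧ g x ≤ 1) {x : X}
    (hs : Summable fun n => WW r m n x) : 0 ≤ UU r m g x ∧ UU r m g x ≤ 1 := by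
  have h1 := Phi_one_ge (r := r) hm0 hs
  refine ⟨mul_nonneg (Phi_nonneg hm0 hg x) (VV_mem hm0 hs).1.le, ?_⟩
  rw [UU, VV, ← div_eq_mul_inv, div_le_one (by linarith)]
  exact Phi_le hm0 hg hs

lemma UU_rec (hm0 : ∀ x, 0 ≤ m x) {g : X → ℝ} (hg : ∀ x, 0 ≤ g x ∧ g x ≤ 1) {x : X}
    (hs : Summable fun n => WW r m n x) (hs' : Summable fun n => WW r m n (r x)) :
    UU r m g x = VV r m x * g x + (1 - VV r m x) * UU r m g (r x) := by
  have h1 := Phi_one_ge (r := r) hm0 hs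
  have h1' := Phi_one_ge (r := r) hm0 hs'
  have e1 := Phi_rec (r := r) hm0 (g := fun _ => 1) (by simp) hs
  have e2 := Phi_rec (r := r) hm0 hg hs
  simp only [UU, VV]
  rw [e2]
  field_simp
  rw [show Phi r m (fun _ => 1) x - 1 = m x * Phi r m (fun _ => 1) (r x) by linarith]
  ring

lemma Phi_meas (hr : Measurable r) (hm : Measurable m) {g : X → ℝ} (hg : Measurable g) :
    Measurable (Phi r m g) := by
  have hW : ∀ n, Measurable (WW r m n) := by
    intro n
    induction n with
    | zero => exact measurable_const
    | succ n ih => exact hm.mul (ih.comp hr)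
  exact Measurable.tsum fun n => (hW n).mul (hg.comp (hr.iterate n))

variable (H : Hyp r μ fib m) (hs : ∀ᵐ x ∂μ, Summable fun n => WW r m n x)
include H hs

lemma VV_gd : Gd μ (VV r m) := by
  refine ⟨(Phi_meas H.hr.measurable H.hm measurable_const).inv.aemeasurable, 1, ?_⟩
  filter_upwards [hs] with x hx
  have := VV_mem (r := r) H.hm0 hx
  rw [abs_of_pos this.1]; exact this.2

lemma UU_gd {g : X → ℝ} (hgm : Measurable g) (hg : ∀ x, 0 ≤ g x ∧ g x ≤ 1) : Gd μ (UU r m g) := by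
  refine ⟨((Phi_meas H.hr.measurable H.hm hgm).mul
    (Phi_meas H.hr.measurable H.hm measurable_const).inv).aemeasurable, 1, ?_⟩
  filter_upwards [hs] with x hx
  have := UU_mem (r := r) H.hm0 hg hx
  rw [abs_of_nonneg this.1]; exact this.2

lemma hs_r : ∀ᵐ x ∂μ, Summable fun n => WW r m n (r x) :=
  H.hr.quasiMeasurePreserving.ae hs

lemma sumV : HasSum (fun n => ∫ x, (RR fib m)^[n] (VV r m) x ∂μ) 1 := by
  have hV := VV_gd H hs
  simp_rw [H.it_int _ hV]
  have key : ∀ᵐ x ∂μ, HasSum (fun n => WW r m n x * VV r m x) 1 := by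
    filter_upwards [hs] with x hx
    have h1 := Phi_one_ge (r := r) H.hm0 hx
    have := hx.hasSum.mul_right (VV r m x)
    have e : ∑' n, WW r m n x = Phi r m (fun _ => 1) x := by simp [Phi]
    have e2 : Phi r m (fun _ => 1) x * VV r m x = 1 := by
      rw [VV, mul_inv_cancel₀ (by linarith)]
    rw [e, e2] at this
    exact this
  have := hasSum_integral_of_dominated_convergence (μ := μ) (F := fun n x => WW r m n x * VV r m x)
    (f := fun _ => (1 : ℝ)) (fun n x => WW r m n x * VV r m x)
    (fun n => ((WW_gd H n).mul hV).1.aestronglyMeasurable)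
    (fun n => by
      filter_upwards [hs] with x hx
      rw [Real.norm_eq_abs, abs_of_nonneg (mul_nonneg (WW_nonneg H.hm0 n x) (VV_mem H.hm0 hx).1.le)])
    (key.mono fun x hx => hx.summable)
    ((integrable_const (1 : ℝ)).congr (key.mono fun x hx => hx.tsum_eq.symm))
    key
  simpa using this

lemma it_V_nonneg (n : ℕ) : 0 ≤ᵐ[μ] (RR fib m)^[n] (VV r m) := by
  have := H.it_mem (f := VV r m) (hs.mono fun x hx => ⟨(VV_mem H.hm0 hx).1.le, (VV_mem H.hm0 hx).2⟩) n
  exact this.mono fun x hx => hx.1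

lemma sumV_ae : ∀ᵐ x ∂μ, Summable fun n => (RR fib m)^[n] (VV r m) x :=
  (ae_summable_aux _ (fun n => (H.it_gd n (VV_gd H hs)).int) (it_V_nonneg H hs)
    (sumV H hs).summable).1

/-- the total mass is not exhausted -/
lemma T_lt : ¬ ∀ᵐ x ∂μ, 1 ≤ ∑' n, (RR fib m)^[n+1] (VV r m) x := by
  intro hc
  have hV := VV_gd H hs
  have h1 := (hasSum_nat_add_iff' 1).2 (sumV H hs)
  simp only [Finset.sum_range_one, Function.iterate_zero, id] at h1
  have hn : ∀ n, ∫ x, ‖(RR fib m)^[n+1] (VV r m) x‖ ∂μ = ∫ x, (RR fib m)^[n+1] (VV r m) x ∂μ := by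
    intro n
    refine integral_congr_ae ?_
    filter_upwards [it_V_nonneg H hs (n+1)] with x hx
    rw [Real.norm_eq_abs, abs_of_nonneg hx]
  have h2 := hasSum_integral_of_summable_integral_norm (μ := μ)
    (F := fun n x => (RR fib m)^[n+1] (VV r m) x) (fun n => (H.it_gd (n+1) hV).int)
    (by simp_rw [hn]; exact h1.summable)
  have h3 := h1.unique h2
  have hVpos : 0 < ∫ x, VV r m x ∂μ := by
    rw [integral_pos_iff_support_of_nonneg_ae (hs.mono fun x hx => (VV_mem H.hm0 hx).1.le) hV.int]
    have : ∀ᵐ x ∂μ, x ∈ Function.support (VV r m) := hs.mono fun x hx => (VV_mem H.hm0 hx).1.ne'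
    rw [pos_iff_ne_zero]
    intro h0
    have h00 : ∀ᵐ x ∂μ, x ∉ Function.support (VV r m) := measure_eq_zero_iff_ae_notMem.1 h0
    obtain ⟨x, a, b⟩ := (this.and h00).exists
    exact b a
  have hint : Integrable (fun x => ∑' n, (RR fib m)^[n+1] (VV r m) x) μ := by
    exact (ae_summable_aux _ (fun n => (H.it_gd (n+1) hV).int) (fun n => it_V_nonneg H hs (n+1))
      h1.summable).2
  have h4 : ∫ x, (1 : ℝ) ∂μ ≤ ∫ x, ∑' n, (RR fib m)^[n+1] (VV r m) x ∂μ :=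
    integral_mono_ae (integrable_const _) hint hc
  rw [← h3] at h4
  simp at h4
  linarith

end Harm

section Fin
variable {X : Type*} [MeasurableSpace X]
variable {r : X → X} {μ : Measure X} [IsProbabilityMeasure μ] {fib : X → Finset X} {m : X → ℝ}

lemma TT_succ (n : ℕ) : ∀ x, TT r fib m (n+1) x = RR fib m (fun y => TT r fib m n y + VV r m y) x := by
  induction n with
  | zero => intro x; simp [TT]
  | succ n ih =>
    intro x
    have e : (fun y => TT r fib m (n+1) y + VV r m y) =
        fun y => (TT r fib m n y + VV r m y) + (RR fib m)^[n+1] (VV r m) y := by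
      ext y
      simp only [TT, Finset.sum_range_succ]; ring
    rw [e, RR_add, ← ih x, ← Function.iterate_succ_apply' (RR fib m)]
    simp only [TT, Finset.sum_range_succ]

variable (H : Hyp r μ fib m) (hs : ∀ᵐ x ∂μ, Summable fun n => WW r m n x)
include H hs

lemma TT_nonneg (n : ℕ) : ∀ᵐ x ∂μ, 0 ≤ TT r fib m n x := by
  have := ae_all_iff.2 (fun n => it_V_nonneg H hs (n+1))
  filter_upwards [this] with x hx
  exact Finset.sum_nonneg fun k _ => hx k

lemma U_lower {g : X → ℝ} (hg : ∀ x, 0 ≤ g x ∧ g x ≤ 1) (n : ℕ) :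
    ∀ᵐ x ∂μ, UU r m g x * max 0 (1 - TT r fib m n x) ≤ (RR fib m)^[n] (UU r m g) x := by
  induction n with
  | zero => filter_upwards with x; simp [TT]
  | succ n ih =>
    have h1 := H.rr_mono ih
    have h2 : ∀ᵐ y ∂μ, UU r m g (r y) * max 0 (1 - (TT r fib m n y + VV r m y)) ≤
        UU r m g y * max 0 (1 - TT r fib m n y) := by
      filter_upwards [hs, hs_r H hs, TT_nonneg H hs n] with y hy hy' hT
      have hv := VV_mem (r := r) H.hm0 hy
      have hu' := UU_mem (r := r) H.hm0 hg hy'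
      rw [UU_rec H.hm0 hg hy hy']
      set v := VV r m y
      set u := UU r m g (r y)
      set T := TT r fib m n y
      have a0 : 0 ≤ max 0 (1 - T) := le_max_left _ _
      have a1 : max 0 (1 - (T + v)) ≤ (1 - v) * max 0 (1 - T) := by
        refine max_le (mul_nonneg (by linarith [hv.2]) a0) ?_
        rcases le_total (1 - T) 0 with h | h
        · rw [max_eq_left h]; linarith [hv.1]
        · rw [max_eq_right h]; nlinarith [hv.1]
      have a2 : 0 ≤ v * g y * max 0 (1 - T) := mul_nonneg (mul_nonneg hv.1.le (hg y).1) a0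
      have a3 := mul_le_mul_of_nonneg_left a1 hu'.1
      nlinarith
    have h3 := H.rr_mono h2
    have h4 := H.rr_mono (f := fun _ => 0) (g := fun y => max 0 (1 - (TT r fib m n y + VV r m y)))
      (ae_of_all _ fun y => le_max_left _ _)
    have h5 := H.rr_mono (f := fun y => 1 - (TT r fib m n y + VV r m y))
      (g := fun y => max 0 (1 - (TT r fib m n y + VV r m y)))
      (ae_of_all _ fun y => le_max_right _ _)
    filter_upwards [h1, h3, h4, h5, H.rr_one, hs] with x b1 b3 b4 b5 b6 hx
    rw [Function.iterate_succ_apply']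
    refine le_trans ?_ (b3.trans b1)
    rw [H.rr_mul (fun y => max 0 (1 - (TT r fib m n y + VV r m y))) (UU r m g)]
    refine mul_le_mul_of_nonneg_left (max_le ?_ ?_) (UU_mem H.hm0 hg hx).1
    · simpa [RR, Avg] using b4
    · rw [RR_sub, b6, ← TT_succ] at b5
      exact b5

lemma U_step {g : X → ℝ} (hg : ∀ x, 0 ≤ g x ∧ g x ≤ 1) (n : ℕ) :
    ∀ᵐ x ∂μ, |(RR fib m)^[n+1] (UU r m g) x - (RR fib m)^[n] (UU r m g) x|
      ≤ (RR fib m)^[n+1] (VV r m) x := by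
  induction n with
  | zero =>
    have h : ∀ᵐ y ∂μ, |UU r m g y - (UU r m g (r y) * 1)| ≤ VV r m y := by
      filter_upwards [hs, hs_r H hs] with y hy hy'
      have hv := VV_mem (r := r) H.hm0 hy
      have hu' := UU_mem (r := r) H.hm0 hg hy'
      rw [UU_rec H.hm0 hg hy hy']
      have := hg y
      rw [show VV r m y * g y + (1 - VV r m y) * UU r m g (r y) - UU r m g (r y) * 1 =
        VV r m y * (g y - UU r m g (r y)) by ring, abs_mul, abs_of_pos hv.1]
      refine mul_le_of_le_one_right hv.1.le ?_
      rw [abs_le]; constructor <;> linarith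
    filter_upwards [H.rr_abs h, H.rr_one] with x hx h1
    rw [H.rr_mul (fun _ => 1) (UU r m g), h1, mul_one] at hx
    exact hx
  | succ n ih =>
    have := H.rr_abs ih
    simp_rw [← Function.iterate_succ_apply' (RR fib m)] at this
    exact this

lemma U_lim {g : X → ℝ} (hgm : Measurable g) (hg : ∀ x, 0 ≤ g x ∧ g x ≤ 1) :
    ∃ f : X → ℝ, Measurable f ∧ (∀ x, 0 ≤ f x ∧ f x ≤ 1) ∧
      (∀ᵐ x ∂μ, Tendsto (fun n => (RR fib m)^[n] (UU r m g) x) atTop (nhds (f x))) ∧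
      ∀ᵐ x ∂μ, RR fib m f x = f x := by
  have hconv : ∀ᵐ x ∂μ, ∃ l, Tendsto (fun n => (RR fib m)^[n] (UU r m g) x) atTop (nhds l) := by
    filter_upwards [ae_all_iff.2 (U_step H hs hg), sumV_ae H hs] with x hx hS
    have hS1 := (summable_nat_add_iff 1).2 hS
    refine cauchySeq_tendsto_of_complete (cauchySeq_of_dist_le_of_summable _ (fun n => ?_) hS1)
    rw [dist_comm, Real.dist_eq]
    exact hx n
  obtain ⟨f0, hf0, hlim⟩ := measurable_limit_of_tendsto_metrizable_ae (L := atTop)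
    (fun n => (H.it_gd n (UU_gd H hs hgm hg)).1) hconv
  have hmem := ae_all_iff.2 (H.it_mem (f := UU r m g) (hs.mono fun x hx => UU_mem H.hm0 hg hx))
  have hlim2 : ∀ᵐ x ∂μ, Tendsto (fun n => (RR fib m)^[n] (UU r m g) x) atTop
      (nhds (max 0 (min 1 (f0 x)))) := by
    filter_upwards [hlim, hmem] with x hx hm
    have h0 := ge_of_tendsto' hx fun n => (hm n).1
    have h1 := le_of_tendsto' hx fun n => (hm n).2
    rwa [min_eq_right h1, max_eq_right h0]
  refine ⟨fun x => max 0 (min 1 (f0 x)), measurable_const.max (measurable_const.min hf0),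
    fun x => ⟨le_max_left _ _, max_le zero_le_one (min_le_left _ _)⟩, hlim2, ?_⟩
  filter_upwards [H.rr_tendsto hlim2, hlim2] with x hx hx2
  simp_rw [← Function.iterate_succ_apply' (RR fib m)] at hx
  exact tendsto_nhds_unique hx ((tendsto_add_atTop_iff_nat 1).2 hx2)

omit hs in
lemma it_add {f g h : X → ℝ} (hh : ∀ᵐ x ∂μ, h x = f x + g x) (n : ℕ) :
    ∀ᵐ x ∂μ, (RR fib m)^[n] h x = (RR fib m)^[n] f x + (RR fib m)^[n] g x := by
  induction n with
  | zero => exact hh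
  | succ n ih =>
    have := H.rr_congr ih
    simp_rw [RR_add, ← Function.iterate_succ_apply' (RR fib m)] at this
    exact this

end Fin

lemma ind_mem {X : Type*} (A : Set X) (x : X) :
    0 ≤ A.indicator (fun _ => (1 : ℝ)) x ∧ A.indicator (fun _ => (1 : ℝ)) x ≤ 1 := by
  by_cases h : x ∈ A <;> simp [h]

lemma no_const {X : Type*} [MetricSpace X] [CompactSpace X] [MeasurableSpace X] [BorelSpace X]
    {r : X → X} {μ : Measure X} [IsProbabilityMeasure μ] {fib : X → Finset X} {m : X → ℝ}
    (H : Hyp r μ fib m) (hs : ∀ᵐ x ∂μ, Summable fun n => WW r m n x)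
    (hat : ∀ x, μ {x} = 0)
    (hc : ∀ A : Set X, MeasurableSet A → ∃ c : ℝ, ∀ᵐ x ∂μ, Tendsto
      (fun n => (RR fib m)^[n] (UU r m (A.indicator fun _ => 1)) x) atTop (nhds c)) : False := by
  choose c hc using hc
  have hmem : ∀ A hA, 0 ≤ c A hA ∧ c A hA ≤ 1 := by
    intro A hA
    have hmem := ae_all_iff.2 (H.it_mem (f := UU r m (A.indicator fun _ => 1))
      (hs.mono fun x hx => UU_mem H.hm0 (ind_mem A) hx))
    obtain ⟨x, h1, h2⟩ := ((hc A hA).and hmem).exists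
    exact ⟨ge_of_tendsto' h1 fun n => (h2 n).1, le_of_tendsto' h1 fun n => (h2 n).2⟩
  have hadd : ∀ A B C hA hB hC, Disjoint A B → C = A ∪ B → c C hC = c A hA + c B hB := by
    intro A B C hA hB hC hAB hCC
    have h : ∀ᵐ x ∂μ, UU r m (C.indicator fun _ => 1) x =
        UU r m (A.indicator fun _ => 1) x + UU r m (B.indicator fun _ => 1) x := by
      filter_upwards [hs] with x hx
      simp only [UU, ← add_mul]
      congr 1
      simp only [Phi]
      rw [← (Phi_sum H.hm0 (ind_mem A) hx).tsum_add (Phi_sum H.hm0 (ind_mem B) hx), hCC,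
        Set.indicator_union_of_disjoint hAB]
      simp only [mul_add]
    obtain ⟨x, h1, h2, h3, h4⟩ := ((hc A hA).and ((hc B hB).and ((hc C hC).and
      (ae_all_iff.2 (it_add H h))))).exists
    simp_rw [h4] at h3
    exact tendsto_nhds_unique h3 (h1.add h2)
  let T : X → ℝ := fun x => ∑' n, (RR fib m)^[n+1] (VV r m) x
  have hTT : ∀ᵐ x ∂μ, Tendsto (fun n => TT r fib m n x) atTop (nhds (T x)) := by
    filter_upwards [sumV_ae H hs] with x hx
    exact ((summable_nat_add_iff 1).2 hx).hasSum.tendsto_sum_nat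
  have hlow : ∀ A hA, ∀ᵐ x ∂μ, x ∈ A → VV r m x * max 0 (1 - T x) ≤ c A hA := by
    intro A hA
    filter_upwards [hTT, hs, hs_r H hs, hc A hA, ae_all_iff.2 (U_lower H hs (ind_mem A))]
      with x h1 h2 h2' h3 h4 hxA
    have hv := VV_mem (r := r) H.hm0 h2
    have hu := UU_mem (r := r) H.hm0 (ind_mem A) h2'
    have h5 : UU r m (A.indicator fun _ => 1) x * max 0 (1 - T x) ≤ c A hA :=
      le_of_tendsto_of_tendsto' ((tendsto_const_nhds.max (tendsto_const_nhds.sub h1)).const_mul _)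
        h3 h4
    refine le_trans (mul_le_mul_of_nonneg_right ?_ (le_max_left _ _)) h5
    rw [UU_rec H.hm0 (ind_mem A) h2 h2']
    simp only [hxA, Set.indicator_of_mem, mul_one]
    have := mul_nonneg (by linarith [hv.2] : 0 ≤ 1 - VV r m x) hu.1
    linarith
  obtain ⟨N, hN⟩ : ∃ N : ℕ, μ {x | 1 / ((N : ℝ) + 1) < VV r m x * max 0 (1 - T x)} ≠ 0 := by
    by_contra hcon
    push Not at hcon
    have h1 : ∀ᵐ x ∂μ, ∀ N : ℕ, ¬ 1 / ((N : ℝ) + 1) < VV r m x * max 0 (1 - T x) := by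
      rw [ae_all_iff]
      intro N
      rw [ae_iff]
      simpa using hcon N
    apply T_lt H hs
    filter_upwards [h1, hs] with x hx hsx
    by_contra hlt
    have hv := VV_mem (r := r) H.hm0 hsx
    have : 0 < VV r m x * max 0 (1 - T x) :=
      mul_pos hv.1 (lt_max_of_lt_right (by simp only [T]; linarith))
    obtain ⟨n, hn⟩ := exists_nat_one_div_lt this
    exact hx n hn
  set ε : ℝ := 1 / ((N : ℝ) + 1) with hε
  have hεp : 0 < ε := by positivity
  set B : Set X := {x | ε < VV r m x * max 0 (1 - T x)} with hB
  have hBA : ∀ A hA, μ (A ∩ B) ≠ 0 → ε ≤ c A hA := by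
    intro A hA h
    by_contra hlt
    apply h
    rw [measure_eq_zero_iff_ae_notMem]
    filter_upwards [hlow A hA] with x hx hxA
    have h1 := hx hxA.1
    have h2 : ε < VV r m x * max 0 (1 - T x) := hxA.2
    linarith
  have hall : ∀ η : ℝ, 0 < η → ε * μ.real B ≤ η := by
    intro η hη
    have := isCompact_univ.induction_on (X := X) (p := fun s => ∃ s' : Set X, MeasurableSet s' ∧
      s ⊆ s' ∧ ∀ A hA, A ⊆ s' → ε * μ.real (A ∩ B) ≤ η * c A hA)
      ⟨∅, MeasurableSet.empty, subset_rfl, fun A hA h => by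
        obtain rfl := Set.subset_empty_iff.1 h
        simp only [Set.empty_inter, measureReal_empty, mul_zero]
        exact mul_nonneg hη.le (hmem _ _).1⟩
      (fun s t hst ⟨s', h1, h2, h3⟩ => ⟨s', h1, hst.trans h2, h3⟩)
      (fun s t ⟨s', h1, h2, h3⟩ ⟨t', k1, k2, k3⟩ => ⟨s' ∪ t', h1.union k1,
        Set.union_subset_union h2 k2, fun A hA hAs => by
          have a1 := h3 (A ∩ s') (hA.inter h1) Set.inter_subset_right
          have a2 := k3 (A \ s') (hA.diff h1) (fun x hx => (hAs hx.1).resolve_left hx.2)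
          have a3 := hadd (A ∩ s') (A \ s') A (hA.inter h1) (hA.diff h1) hA
            Set.disjoint_sdiff_inter.symm (Set.inter_union_sdiff A s').symm
          have a4 : μ.real (A ∩ B) ≤ μ.real (A ∩ s' ∩ B) + μ.real ((A \ s') ∩ B) := by
            refine le_trans (measureReal_mono ?_) (measureReal_union_le _ _)
            intro x hx
            by_cases h : x ∈ s'
            · exact Or.inl ⟨⟨hx.1, h⟩, hx.2⟩
            · exact Or.inr ⟨⟨hx.1, h⟩, hx.2⟩
          rw [a3]
          nlinarith⟩)
      (fun x _ => by
        obtain ⟨O, hxO, hO, hμ⟩ := Set.exists_isOpen_lt_of_lt {x} (ENNReal.ofReal η)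
          (by rw [hat x]; exact ENNReal.ofReal_pos.2 hη) (μ := μ)
        refine ⟨O, mem_nhdsWithin_of_mem_nhds (hO.mem_nhds (hxO rfl)), O, hO.measurableSet, subset_rfl, ?_⟩
        intro A hA hAO
        by_cases h0 : μ (A ∩ B) = 0
        · rw [measureReal_def, h0]
          simp only [ENNReal.toReal_zero, mul_zero]
          exact mul_nonneg hη.le (hmem _ _).1
        · have b1 := hBA A hA h0
          have b2 : μ.real (A ∩ B) ≤ η := by
            refine (measureReal_mono (Set.inter_subset_left.trans hAO)).trans ?_
            exact ENNReal.toReal_le_of_le_ofReal hη.le hμ.le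
          have b3 : 0 ≤ μ.real (A ∩ B) := measureReal_nonneg
          nlinarith)
    obtain ⟨s', h1, h2, h3⟩ := this
    have h4 := h3 Set.univ MeasurableSet.univ h2
    rw [Set.univ_inter] at h4
    have := (hmem Set.univ MeasurableSet.univ).2
    nlinarith
  have hBp : 0 < μ.real B := by
    rw [measureReal_def]
    exact ENNReal.toReal_pos hN (measure_ne_top _ _)
  have hp := mul_pos hεp hBp
  have := hall (ε * μ.real B / 2) (by linarith)
  linarith

lemma no_atoms {X : Type*} [MetricSpace X] [MeasurableSpace X] [BorelSpace X]
    {r : X → X} {μ : Measure X} [IsProbabilityMeasure μ] {fib : X → Finset X} {m : X → ℝ}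
    (H : Hyp r μ fib m) (herg : Ergodic r μ) (hm1 : ¬ ∀ᵐ x ∂μ, m x = 1) : ∀ x, μ {x} = 0 := by
  classical
  by_contra hcon
  push Not at hcon
  obtain ⟨a, ha⟩ := hcon
  have hmass : ∀ y, μ.real {y} * ((fib (r y)).card : ℝ) = μ.real {r y} := by
    intro y
    have h := H.hI (({y} : Set X).indicator fun _ => 1)
      (measurable_const.indicator (measurableSet_singleton y))
      ⟨1, fun x => by have := ind_mem {y} x; rw [abs_of_nonneg this.1]; exact this.2⟩
    have e : ∀ x, Avg fib (({y} : Set X).indicator fun _ => 1) x =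
        ({r y} : Set X).indicator (fun _ => ((fib (r y)).card : ℝ)⁻¹) x := by
      intro x
      simp only [Avg]
      by_cases hx : r y = x
      · subst hx
        rw [Finset.sum_eq_single y]
        · simp
        · intro b _ hb; simp [hb]
        · intro hb; exact absurd ((H.hfib _ _).2 rfl) hb
      · rw [Finset.sum_eq_zero]
        · have : x ∉ ({r y} : Set X) := fun h => hx h.symm
          simp [this]
        · intro b hb
          have : b ≠ y := by rintro rfl; exact hx ((H.hfib _ _).1 hb)
          simp [this]
    simp_rw [e] at h
    rw [integral_indicator (measurableSet_singleton _), integral_indicator (measurableSet_singleton _)] at h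
    simp only [integral_const, smul_eq_mul, measureReal_restrict_apply_univ, mul_one] at h
    have hc : ((fib (r y)).card : ℝ) ≠ 0 := by exact_mod_cast (H.hne _).card_pos.ne'
    rw [h]
    field_simp
  have hcard1 : ∀ y, (1 : ℝ) ≤ (fib (r y)).card := fun y => by exact_mod_cast (H.hne _).card_pos
  have hmono : ∀ y, μ.real {y} ≤ μ.real {r y} := by
    intro y
    rw [← hmass y]
    exact le_mul_of_one_le_right measureReal_nonneg (hcard1 y)
  obtain ⟨x, hx, p, hp, hxp⟩ := H.hr.exists_mem_iterate_mem
    (measurableSet_singleton a).nullMeasurableSet ha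
  have hxa : x = a := hx
  subst hxa
  have hper : r^[p] x = x := hxp
  have hmon : Monotone (fun n => μ.real {r^[n] x}) := monotone_nat_of_le_succ fun n => by
    rw [Function.iterate_succ_apply']; exact hmono _
  have hperk : ∀ n k, r^[n + k * p] x = r^[n] x := by
    intro n k
    rw [Function.iterate_add_apply, mul_comm, Function.iterate_mul, Function.iterate_fixed hper]
  have hconst : ∀ n, μ.real {r^[n] x} = μ.real {x} := by
    intro n
    apply le_antisymm
    · have h1 : n ≤ 0 + n * p := by
        have := Nat.le_mul_of_pos_right n (Nat.pos_of_ne_zero hp); omega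
      have h2 := hmon h1
      simp only [hperk] at h2
      simpa using h2
    · have h2 := hmon (Nat.zero_le n)
      simpa using h2
  have hxpos : 0 < μ.real {x} := by
    rw [measureReal_def]; exact ENNReal.toReal_pos ha (measure_ne_top _ _)
  have hone : ∀ n, (fib (r^[n+1] x)).card = 1 := by
    intro n
    have h := hmass (r^[n] x)
    rw [← Function.iterate_succ_apply' r, hconst, hconst] at h
    have h2 : ((fib (r^[n+1] x)).card : ℝ) = 1 := by
      have : μ.real {x} * (((fib (r^[n+1] x)).card : ℝ) - 1) = 0 := by linarith
      rcases mul_eq_zero.1 this with h | h <;> linarith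
    exact_mod_cast h2
  have hfs : ∀ n, fib (r^[n+1] x) = {r^[n] x} := by
    intro n
    obtain ⟨y, hy⟩ := Finset.card_eq_one.1 (hone n)
    have : r^[n] x ∈ fib (r^[n+1] x) := (H.hfib _ _).2 (Function.iterate_succ_apply' r n x).symm
    rw [hy, Finset.mem_singleton] at this
    rw [hy, this]
  set O : Set X := Set.range fun n : ℕ => r^[n] x with hO
  have hOm : MeasurableSet O := (Set.countable_range _).measurableSet
  have hOi : r ⁻¹' O = O := by
    ext y
    constructor
    · rintro ⟨n, hn⟩
      have hn : r^[n] x = r y := hn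
      have hn1 : r^[(n + p - 1) + 1] x = r y := by
        rw [show n + p - 1 + 1 = n + 1 * p by omega, hperk, hn]
      have : y ∈ fib (r^[(n + p - 1) + 1] x) := (H.hfib _ _).2 hn1.symm
      rw [hfs, Finset.mem_singleton] at this
      exact ⟨_, this.symm⟩
    · rintro ⟨n, rfl⟩
      exact ⟨n + 1, Function.iterate_succ_apply' r n x⟩
  have hOae : ∀ᵐ y ∂μ, y ∈ O := by
    rcases herg.toPreErgodic.ae_mem_or_ae_notMem hOm hOi with h | h
    · exact h
    · exfalso
      apply ha
      refine measure_mono_null ?_ (measure_eq_zero_iff_ae_notMem.2 h)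
      rintro _ rfl
      exact ⟨0, rfl⟩
  apply hm1
  filter_upwards [hOae] with y hy
  obtain ⟨n, rfl⟩ := hy
  have hq : Avg fib m (r^[n+1] x) = 1 := by
    by_contra hq
    have h0 : μ {r^[n+1] x} = 0 := by
      refine measure_mono_null ?_ (ae_iff.1 H.hq)
      rintro _ rfl
      exact hq
    have := hconst (n+1)
    rw [measureReal_def, h0] at this
    simp at this
    linarith
  rw [Avg, hfs] at hq
  simpa using hq

/-- Under the hypotheses of the main theorem, the transfer operator
`R_{m0} f(x) = (1/#r⁻¹(x)) Σ_{r(y)=x} |m0(y)|² f(y)` has a bounded measurable fixed point which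
is not μ-a.e. constant. -/
theorem exists_nonconstant_transfer_fixed_point
    {X : Type*} [MetricSpace X] [CompactSpace X] [MeasurableSpace X] [BorelSpace X]
    (r : X → X) (hr : Measurable r) (hsurj : Function.Surjective r)
    (hfin : ∀ x : X, (r ⁻¹' {x}).Finite)
    (μ : Measure X) [IsProbabilityMeasure μ] (hinv : StronglyInvariant r μ)
    (herg : Ergodic r μ)
    (m0 : X → ℂ) (hm0 : BddMeasC m0) (hqmf : IsQMF r μ m0)
    (hne1 : ¬ (∀ᵐ x ∂μ, ‖m0 x‖ = 1))
    (hns : μ {x | m0 x = 0} = 0)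
    (hlog : Integrable (fun x => Real.log (‖m0 x‖ ^ 2)) μ) :
    ∃ f : X → ℂ, BddMeasC f ∧ (¬ ∃ c : ℂ, f =ᵐ[μ] fun _ => c) ∧
      ∀ᵐ x ∂μ, ((Nat.card (r ⁻¹' {x}) : ℂ))⁻¹ *
          ∑' y : (r ⁻¹' {x}), (‖m0 (y : X)‖ ^ 2 : ℂ) * f (y : X) = f x := by
  classical
  set fib : X → Finset X := fun x => (hfin x).toFinset with hfibdef
  have hfib : ∀ x y, y ∈ fib x ↔ r y = x := by intro x y; simp [hfibdef]
  have hne : ∀ x, (fib x).Nonempty := by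
    intro x
    obtain ⟨y, hy⟩ := hsurj x
    exact ⟨y, (hfib x y).2 hy⟩
  have hcard : ∀ x, Nat.card (r ⁻¹' {x}) = (fib x).card := by
    intro x
    rw [Nat.card_coe_set_eq, Set.ncard_eq_toFinset_card _ (hfin x)]
  have hts : ∀ (f : X → ℝ) (x : X), ∑' y : (r ⁻¹' {x}), f (y : X) = ∑ y ∈ fib x, f y := by
    intro f x
    rw [← Finset.tsum_subtype' (fib x) f]
    have : (r ⁻¹' {x}) = ((fib x : Finset X) : Set X) := by simp [hfibdef]
    rw [this]
  have hAvg : ∀ (f : X → ℝ) (x : X), (Nat.card (r ⁻¹' {x}) : ℝ)⁻¹ * ∑' y : (r ⁻¹' {x}), f (y : X)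
      = Avg fib f x := by
    intro f x
    rw [hcard, hts, Avg]
  set m : X → ℝ := fun x => ‖m0 x‖ ^ 2 with hmdef
  obtain ⟨hmm, C, hC⟩ := hm0
  have H : Hyp r μ fib m :=
    { hr := herg.toMeasurePreserving
      hfib := hfib
      hne := hne
      hI := by
        intro f hf hb
        rw [hinv f hf hb]
        simp_rw [hAvg]
      hm := hmm.norm.pow_const 2
      hm0 := fun x => by positivity
      hmC := ⟨C ^ 2, fun x => by
        rw [abs_of_nonneg (by positivity)]
        exact pow_le_pow_left₀ (norm_nonneg _) (hC x) 2⟩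
      hq := by
        filter_upwards [hqmf] with x hx
        rw [← hAvg]; exact hx }
  have hm1 : ¬ ∀ᵐ x ∂μ, m x = 1 := by
    intro h
    apply hne1
    filter_upwards [h] with x hx
    exact (pow_eq_one_iff_of_nonneg (norm_nonneg _) two_ne_zero).1 hx
  have hint1 : ∫ x, m x ∂μ = 1 := by
    rw [← (H.avg_gd H.gm).2, integral_congr_ae H.hq]; simp
  have hpos : ∀ᵐ x ∂μ, 0 < m x := by
    have : ∀ᵐ x ∂μ, ¬ (m0 x = 0) := by rw [ae_iff]; simpa using hns
    filter_upwards [this] with x hx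
    have := norm_pos_iff.2 hx
    simp only [hmdef]; positivity
  have hs : ∀ᵐ x ∂μ, Summable fun n => WW r m n x :=
    (WW_summable herg H.hm hpos H.gm.int hlog hint1 hm1).mono fun x hx => hx.2
  have hat := no_atoms H herg hm1
  by_contra hcon
  push Not at hcon
  refine no_const H hs hat fun A hA => ?_
  obtain ⟨f, hfm, hf01, hlim, hfix⟩ := U_lim H hs (g := A.indicator fun _ => 1)
    (measurable_const.indicator hA) (ind_mem A)
  by_cases hconst : ∃ c : ℂ, (fun x => (f x : ℂ)) =ᵐ[μ] fun _ => c
  · obtain ⟨c, hc⟩ := hconst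
    refine ⟨c.re, ?_⟩
    filter_upwards [hlim, hc] with x hx hcx
    rw [← hcx]
    simpa using hx
  · exfalso
    refine hcon (fun x => (f x : ℂ)) ⟨Complex.measurable_ofReal.comp hfm, 1, fun x => ?_⟩ ?_ ?_
    · rw [Complex.norm_real, Real.norm_eq_abs, abs_of_nonneg (hf01 x).1]; exact (hf01 x).2
    · intro c hc
      exact hconst ⟨c, hc⟩
    · filter_upwards [hfix] with x hx
      rw [RR, ← hAvg] at hx
      rw [← hx]
      push_cast [hmdef]
      simp
end
end

section
/- Let X be a compact metric space, r : X → X a Borel measurable, onto, finite-to-one map, μ a strongly invariant Borel probability measure with respect to which r is ergodic, and m0 ∈ L∞(X) a non-singular QMF filter with |m0| not μ-a.e. equal to 1 and log|m0|² ∈ L¹(X,μ). Let (X_∞, μ_∞) be the solenoid with its path-space measure, and let A_0 ⊆ X be a measurable set with μ(A_0) > 0 such that Σ_{m≥1} ∫_{A_0} |m0(x)⋯m0(r^{m-1}(x))|² dμ(x) < ∞. Then for μ_∞-a.e. z = (z_n)_{n≥0} ∈ X_∞, the set {n : z_n ∈ A_0} is finite, i.e. there exists k_z such that z_n ∉ A_0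 for all n ≥ k_z. -/
open MeasureTheory Filter

noncomputable section

/-- normalized fibre average -/
def fibAvg {X : Type*} (r : X → X) (f : X → ℝ) (x : X) : ℝ :=
  (Nat.card (r ⁻¹' {x}) : ℝ)⁻¹ * ∑' y : (r ⁻¹' {x}), f (y : X)

/-- iterated fibre average -/
def fibIter {X : Type*} (r : X → X) (n : ℕ) (f : X → ℝ) (x : X) : ℝ :=
  ∑' y : (r^[n] ⁻¹' {x}),
    (∏ k ∈ Finset.range n, (Nat.card (r ⁻¹' {r (r^[k] (y : X))}) : ℝ)⁻¹) * f (y : X)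

lemma card_fib_ne {X : Type*} {r : X → X} (hsurj : Function.Surjective r)
    (hfin : ∀ x : X, (r ⁻¹' {x}).Finite) (x : X) : (Nat.card (r ⁻¹' {x}) : ℝ) ≠ 0 := by
  have h1 : Finite (r ⁻¹' {x}) := hfin x
  have h2 : Nonempty (r ⁻¹' {x}) := by
    obtain ⟨y, hy⟩ := hsurj x
    exact ⟨⟨y, hy⟩⟩
  exact_mod_cast Nat.card_pos.ne'

lemma fibAvg_add_const {X : Type*} {r : X → X} (hsurj : Function.Surjective r)
    (hfin : ∀ x : X, (r ⁻¹' {x}).Finite) (f : X → ℝ) (c : ℝ) (x : X) :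
    fibAvg r (fun y => f y + c) x = fibAvg r f x + c := by
  have h1 : Finite (r ⁻¹' {x}) := hfin x
  have := Fintype.ofFinite (r ⁻¹' {x})
  have h0 := card_fib_ne hsurj hfin x
  unfold fibAvg
  rw [tsum_fintype, tsum_fintype, Finset.sum_add_distrib, mul_add, Finset.sum_const,
    Finset.card_univ, ← Nat.card_eq_fintype_card, nsmul_eq_mul, inv_mul_cancel_left₀ h0]

lemma fibAvg_bound {X : Type*} {r : X → X} (hsurj : Function.Surjective r)
    (hfin : ∀ x : X, (r ⁻¹' {x}).Finite) (f : X → ℝ) (C : ℝ) (hC : ∀ x, |f x| ≤ C) (x : X) :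
    |fibAvg r f x| ≤ C := by
  have h1 : Finite (r ⁻¹' {x}) := hfin x
  have := Fintype.ofFinite (r ⁻¹' {x})
  have h0 := card_fib_ne hsurj hfin x
  unfold fibAvg
  rw [tsum_fintype, abs_mul, abs_of_nonneg (by positivity : (0:ℝ) ≤ (Nat.card (r ⁻¹' {x}) : ℝ)⁻¹)]
  have h2 : |∑ y : (r ⁻¹' {x}), f (y : X)| ≤ (Nat.card (r ⁻¹' {x}) : ℝ) * C := by
    refine (Finset.abs_sum_le_sum_abs _ _).trans ?_
    refine (Finset.sum_le_sum (fun (i : (r ⁻¹' {x})) _ => hC (i : X))).trans ?_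
    rw [Finset.sum_const, Finset.card_univ, ← Nat.card_eq_fintype_card, nsmul_eq_mul]
  calc _ ≤ (Nat.card (r ⁻¹' {x}) : ℝ)⁻¹ * ((Nat.card (r ⁻¹' {x}) : ℝ) * C) := by gcongr
    _ = C := inv_mul_cancel_left₀ h0 C

lemma fibAvg_integrable {X : Type*} [MeasurableSpace X] {r : X → X}
    (hsurj : Function.Surjective r) (hfin : ∀ x : X, (r ⁻¹' {x}).Finite)
    {μ : Measure X} [IsProbabilityMeasure μ] (hinv : StronglyInvariant r μ)
    (f : X → ℝ) (hf : Measurable f) (C : ℝ) (hC : ∀ x, |f x| ≤ C) :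
    Integrable (fibAvg r f) μ := by
  have hfi : Integrable f μ := Integrable.of_bound hf.aestronglyMeasurable C
    (Eventually.of_forall hC)
  have h := hinv (fun y => f y + (C + 1)) (hf.add_const _) ⟨C + |C + 1|, fun x =>
    (abs_add_le _ _).trans (by gcongr; exact hC x)⟩
  have hpos : 1 ≤ ∫ x, (f x + (C + 1)) ∂μ := by
    have : ∫ x, (1:ℝ) ∂μ ≤ ∫ x, (f x + (C + 1)) ∂μ := by
      refine integral_mono (integrable_const _) (hfi.add (integrable_const _)) (fun x => ?_)
      have := (abs_le.1 (hC x)).1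
      simp only; linarith
    simpa using this
  have hi : Integrable (fibAvg r (fun y => f y + (C + 1))) μ := by
    by_contra hn
    have h' := integral_undef hn
    have h'' : ∫ x, (f x + (C + 1)) ∂μ = ∫ x, fibAvg r (fun y => f y + (C + 1)) x ∂μ := h
    rw [h''] at hpos
    linarith
  have := hi.sub (integrable_const (C + 1))
  refine this.congr (Eventually.of_forall fun x => ?_)
  simp [fibAvg_add_const hsurj hfin]

lemma fibAvg_null {X : Type*} [MeasurableSpace X] {r : X → X}
    (hsurj : Function.Surjective r) (hfin : ∀ x : X, (r ⁻¹' {x}).Finite)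
    {μ : Measure X} [IsProbabilityMeasure μ] (hinv : StronglyInvariant r μ)
    (f g : X → ℝ) (hfg : f =ᵐ[μ] g) : fibAvg r f =ᵐ[μ] fibAvg r g := by
  obtain ⟨N, hN, hNm, hN0⟩ := exists_measurable_superset_of_null (ae_iff.1 hfg)
  have hm : Measurable (N.indicator (fun _ => (1:ℝ))) := measurable_const.indicator hNm
  have hb : ∀ x, |N.indicator (fun _ => (1:ℝ)) x| ≤ 1 := fun x => by
    by_cases hx : x ∈ N <;> simp [hx]
  have hi := fibAvg_integrable hsurj hfin hinv _ hm 1 hb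
  have h0 : ∫ x, fibAvg r (N.indicator (fun _ => (1:ℝ))) x ∂μ = 0 := by
    have := hinv _ hm ⟨1, hb⟩
    rw [integral_indicator hNm] at this
    refine this.symm.trans ?_
    simp [Measure.real, hN0]
  have hnn : 0 ≤ fibAvg r (N.indicator (fun _ => (1:ℝ))) := fun x => by
    unfold fibAvg
    refine mul_nonneg (by positivity) (tsum_nonneg fun y => ?_)
    exact Set.indicator_nonneg (fun _ _ => zero_le_one) _
  have h1 := (integral_eq_zero_iff_of_nonneg hnn hi).1 h0
  filter_upwards [h1] with x hx
  have hF : Finite (r ⁻¹' {x}) := hfin x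
  have := Fintype.ofFinite (r ⁻¹' {x})
  have hc := card_fib_ne hsurj hfin x
  unfold fibAvg at hx ⊢
  rw [tsum_fintype] at hx
  have hx2 : ∑ y : (r ⁻¹' {x}), N.indicator (fun _ => (1:ℝ)) (y : X) = 0 := by
    rcases mul_eq_zero.1 hx with h | h
    · exact absurd (inv_eq_zero.1 h) hc
    · exact h
  rw [Finset.sum_eq_zero_iff_of_nonneg
    (fun y _ => Set.indicator_nonneg (fun _ _ => zero_le_one) _)] at hx2
  congr 1
  refine tsum_congr fun y => ?_
  have hy := hx2 y (Finset.mem_univ _)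
  by_contra hne
  have : (y : X) ∈ N := hN hne
  simp [this] at hy

lemma fibAvg_step {X : Type*} [MeasurableSpace X] {r : X → X}
    (hsurj : Function.Surjective r) (hfin : ∀ x : X, (r ⁻¹' {x}).Finite)
    {μ : Measure X} [IsProbabilityMeasure μ] (hinv : StronglyInvariant r μ)
    (f : X → ℝ) (hf : ∃ g : X → ℝ, Measurable g ∧ (∃ C, ∀ x, |g x| ≤ C) ∧ f =ᵐ[μ] g) :
    (∃ g : X → ℝ, Measurable g ∧ (∃ C, ∀ x, |g x| ≤ C) ∧ fibAvg r f =ᵐ[μ] g) ∧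
      ∫ x, fibAvg r f x ∂μ = ∫ x, f x ∂μ := by
  obtain ⟨g, hg, ⟨C, hC⟩, hfg⟩ := hf
  have h1 := fibAvg_null hsurj hfin hinv f g hfg
  have hi := fibAvg_integrable hsurj hfin hinv g hg C hC
  have hb := fibAvg_bound hsurj hfin g C hC
  constructor
  · obtain ⟨k, hk, hgk⟩ := hi.aemeasurable
    refine ⟨fun x => max (-C) (min C (k x)), measurable_const.max (measurable_const.min hk),
      ⟨|C|, fun x => ?_⟩, ?_⟩
    · have : 0 ≤ C := (abs_nonneg _).trans (hC x)
      rw [abs_of_nonneg this, abs_le]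
      exact ⟨le_max_left _ _, max_le (by linarith) (min_le_left _ _)⟩
    · filter_upwards [h1, hgk] with x hx hx2
      rw [hx, ← hx2, min_eq_right (abs_le.1 (hb x)).2, max_eq_right (abs_le.1 (hb x)).1]
  · rw [integral_congr_ae h1, integral_congr_ae hfg]
    exact (hinv g hg ⟨C, hC⟩).symm

lemma finite_iter {X : Type*} {r : X → X} (hfin : ∀ x : X, (r ⁻¹' {x}).Finite) (n : ℕ) (x : X) :
    (r^[n] ⁻¹' {x}).Finite := by
  induction n generalizing x with
  | zero => simp
  | succ n ih =>
    rw [Function.iterate_succ', Set.preimage_comp]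
    exact Set.Finite.preimage' (hfin x) (fun b _ => ih b)

lemma fibIter_succ {X : Type*} {r : X → X} (hfin : ∀ x : X, (r ⁻¹' {x}).Finite)
    (n : ℕ) (f : X → ℝ) (x : X) :
    fibIter r (n + 1) f x = fibAvg r (fibIter r n f) x := by
  unfold fibAvg fibIter
  have h1 : Finite (r ⁻¹' {x}) := hfin x
  have h2 : ∀ y, Finite (r^[n] ⁻¹' {y}) := fun y => finite_iter hfin n y
  let e : (Σ y : (r ⁻¹' {x}), (r^[n] ⁻¹' {(y : X)})) ≃ (r^[n+1] ⁻¹' {x}) :=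
    { toFun := fun p => ⟨p.2.1, by
        have a := p.2.2
        have b := p.1.2
        simp only [Set.mem_preimage, Set.mem_singleton_iff] at a b ⊢
        rw [Function.iterate_succ_apply', a, b]⟩
      invFun := fun w => ⟨⟨r^[n] w.1, by
        have := w.2
        simpa only [Set.mem_preimage, Set.mem_singleton_iff,
          Function.iterate_succ_apply'] using this⟩, ⟨w.1, rfl⟩⟩
      left_inv := by
        rintro ⟨⟨y, hy⟩, ⟨w, hw⟩⟩
        simp only [Set.mem_preimage, Set.mem_singleton_iff] at hw
        subst hw
        rfl
      right_inv := fun w => rfl }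
  rw [← e.tsum_eq, Summable.tsum_sigma' (fun _ => Summable.of_finite) Summable.of_finite,
    ← tsum_mul_left]
  refine tsum_congr fun y => ?_
  rw [← tsum_mul_left]
  refine tsum_congr fun w => ?_
  have a : r^[n] (w : X) = y := w.2
  have b : r (y : X) = x := y.2
  have c : ((e ⟨y, w⟩ : (r^[n+1] ⁻¹' {x})) : X) = w := rfl
  rw [c, Finset.prod_range_succ, a, b]
  ring

lemma fibIter_integral {X : Type*} [MeasurableSpace X] {r : X → X}
    (hsurj : Function.Surjective r) (hfin : ∀ x : X, (r ⁻¹' {x}).Finite)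
    {μ : Measure X} [IsProbabilityMeasure μ] (hinv : StronglyInvariant r μ)
    (f : X → ℝ) (hf : Measurable f) (hC : ∃ C, ∀ x, |f x| ≤ C) (n : ℕ) :
    (∃ g : X → ℝ, Measurable g ∧ (∃ C, ∀ x, |g x| ≤ C) ∧ fibIter r n f =ᵐ[μ] g) ∧
      ∫ x, fibIter r n f x ∂μ = ∫ x, f x ∂μ := by
  induction n with
  | zero =>
    have : fibIter r 0 f = f := by
      funext x
      unfold fibIter
      have e : (r^[0] ⁻¹' {x}) = {x} := by simp
      rw [e, tsum_singleton x (fun y => (∏ k ∈ Finset.range 0,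
        (Nat.card (r ⁻¹' {r (r^[k] y)}) : ℝ)⁻¹) * f y)]
      simp
    rw [this]
    exact ⟨⟨f, hf, hC, EventuallyEq.rfl⟩, rfl⟩
  | succ n ih =>
    have : fibIter r (n + 1) f = fibAvg r (fibIter r n f) := funext (fibIter_succ hfin n f)
    rw [this]
    have := fibAvg_step hsurj hfin hinv _ ih.1
    exact ⟨this.1, this.2.trans ih.2⟩

lemma path_iter {X : Type*} {r : X → X} {n : ℕ} {q : Fin (n + 1) → X}
    (h : ∀ i : Fin n, r (q i.succ) = q i.castSucc) (k : ℕ) (hk : k ≤ n) :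
    r^[k] (q (Fin.last n)) = q ⟨n - k, by omega⟩ := by
  induction k with
  | zero => rfl
  | succ k ih =>
    rw [Function.iterate_succ_apply', ih (by omega)]
    have := h ⟨n - (k + 1), by omega⟩
    rw [← show (⟨n - (k+1), by omega⟩ : Fin n).succ = (⟨n - k, by omega⟩ : Fin (n+1)) from
      Fin.ext (by simp; omega)]
    exact this

lemma path_sum {X : Type*} (r : X → X) (m0 : X → ℂ) (n : ℕ) (f : X → ℝ) (x : X) :
    (∑' q : {q : Fin (n + 1) → X //
            q 0 = x ∧ ∀ i : Fin n, r (q i.succ) = q i.castSucc},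
          (∏ i : Fin n,
            ‖m0 (q.1 i.succ)‖ ^ 2 / (Nat.card (r ⁻¹' {r (q.1 i.succ)}) : ℝ)) *
              f (q.1 (Fin.last n))) =
      fibIter r n (fun y => (∏ k ∈ Finset.range n, ‖m0 (r^[k] y)‖ ^ 2) * f y) x := by
  unfold fibIter
  let e : {q : Fin (n + 1) → X // q 0 = x ∧ ∀ i : Fin n, r (q i.succ) = q i.castSucc} ≃
      (r^[n] ⁻¹' {x}) :=
    { toFun := fun q => ⟨q.1 (Fin.last n), by
        have := path_iter q.2.2 n le_rfl
        simp only [Set.mem_preimage, Set.mem_singleton_iff]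
        rw [this]
        refine Eq.trans ?_ q.2.1
        exact congrArg q.1 (Fin.ext (by simp))⟩
      invFun := fun y => ⟨fun i => r^[n - (i : ℕ)] y.1, by
        constructor
        · exact y.2
        · intro i
          have hi := i.2
          simp only [Fin.val_succ, Fin.val_castSucc]
          rw [← Function.iterate_succ_apply' r]
          congr 1
          have : (n - ((i:ℕ) + 1)).succ = n - i := by omega
          rw [this]⟩
      left_inv := by
        rintro ⟨q, h0, h⟩
        apply Subtype.ext
        funext i
        have hi := i.2
        simp only
        rw [path_iter h _ (by omega)]
        congr 1
        exact Fin.ext (by simp; omega)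
      right_inv := fun y => by
        apply Subtype.ext
        simp }
  rw [← e.tsum_eq]
  refine tsum_congr fun q => ?_
  have c : ((e q : (r^[n] ⁻¹' {x})) : X) = q.1 (Fin.last n) := rfl
  rw [c, ← mul_assoc, ← Finset.prod_mul_distrib, ← Finset.prod_range_reflect,
    ← Fin.prod_univ_eq_prod_range (fun j => (Nat.card (r ⁻¹' {r (r^[n - 1 - j] (q.1 (Fin.last n)))}) : ℝ)⁻¹ *
      ‖m0 (r^[n - 1 - j] (q.1 (Fin.last n)))‖ ^ 2)]
  congr 1
  refine Finset.prod_congr rfl fun i _ => ?_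
  have hi := i.2
  have : r^[n - 1 - (i:ℕ)] (q.1 (Fin.last n)) = q.1 i.succ := by
    rw [path_iter q.2.2 _ (by omega)]
    exact congrArg q.1 (Fin.ext (by simp only [Fin.val_succ]; omega))
  rw [this, div_eq_mul_inv, mul_comm]

lemma path_real {X : Type*} [MeasurableSpace X] {r : X → X} (hr : Measurable r)
    (hsurj : Function.Surjective r) (hfin : ∀ x : X, (r ⁻¹' {x}).Finite)
    {μ : Measure X} [IsProbabilityMeasure μ] (hinv : StronglyInvariant r μ)
    {m0 : X → ℂ} (hm0 : BddMeasC m0)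
    {ν : Measure (Solenoid r)} (hν : IsPathMeasure r μ m0 ν)
    {A : Set X} (hA : MeasurableSet A) (n : ℕ) :
    ν.real {z | z.1 n ∈ A} = ∫ x in A, ∏ k ∈ Finset.range n, ‖m0 (r^[k] x)‖ ^ 2 ∂μ := by
  obtain ⟨hm, C, hC⟩ := hm0
  have hmi : Measurable (A.indicator (fun _ => (1:ℝ))) := measurable_const.indicator hA
  have hb : ∀ x, |A.indicator (fun _ => (1:ℝ)) x| ≤ 1 := fun x => by
    by_cases hx : x ∈ A <;> simp [hx]
  have h := hν n (fun v => A.indicator (fun _ => (1:ℝ)) (v (Fin.last n)))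
    (hmi.comp (measurable_pi_apply _)) ⟨1, fun v => hb _⟩
  have hms : MeasurableSet {z : Solenoid r | z.1 n ∈ A} :=
    ((measurable_pi_apply n).comp measurable_subtype_coe) hA
  have hl : ∫ z : Solenoid r, A.indicator (fun _ => (1:ℝ)) (z.1 n) ∂ν =
      ν.real {z | z.1 n ∈ A} := by
    rw [← integral_indicator_one hms]
    rfl
  have hl' : ν.real {z | z.1 n ∈ A} = _ := hl.symm.trans h
  rw [hl']
  have hps := fun x => path_sum r m0 n (A.indicator (fun _ => (1:ℝ))) x
  rw [integral_congr_ae (Eventually.of_forall hps)]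
  rw [(fibIter_integral hsurj hfin hinv _ ?_ ?_ n).2, ← integral_indicator hA]
  · refine integral_congr_ae (Eventually.of_forall fun x => ?_)
    by_cases hx : x ∈ A <;> simp [hx]
  · refine Measurable.mul ?_ hmi
    refine Finset.measurable_prod _ fun k _ => ?_
    exact ((hm.comp (hr.iterate k)).norm).pow_const 2
  · refine ⟨∏ k ∈ Finset.range n, C ^ 2, fun x => ?_⟩
    rw [abs_mul, abs_of_nonneg (by positivity : (0:ℝ) ≤ ∏ k ∈ Finset.range n, ‖m0 (r^[k] x)‖ ^ 2)]
    calc _ ≤ (∏ k ∈ Finset.range n, ‖m0 (r^[k] x)‖ ^ 2) * 1 := by gcongr; exact hb x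
      _ ≤ _ := by
        rw [mul_one]
        gcongr
        exact hC _

/-- **Borel–Cantelli step.** If `A₀ ⊆ X` has positive measure and
`Σ_{m≥1} ∫_{A₀} |m0(x)⋯m0(r^{m-1}x)|² dμ < ∞`, then for `μ_∞`-a.e. backward orbit
`z = (z_n)` in the solenoid only finitely many coordinates `z_n` lie in `A₀`. -/
theorem ae_eventually_not_mem_of_summable
    {X : Type*} [MetricSpace X] [CompactSpace X] [MeasurableSpace X] [BorelSpace X]
    (r : X → X) (hr : Measurable r) (hsurj : Function.Surjective r)
    (hfin : ∀ x : X, (r ⁻¹' {x}).Finite)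
    (μ : Measure X) [IsProbabilityMeasure μ] (hinv : StronglyInvariant r μ)
    (herg : Ergodic r μ)
    (m0 : X → ℂ) (hm0 : BddMeasC m0) (hqmf : IsQMF r μ m0)
    (hne1 : ¬ (∀ᵐ x ∂μ, ‖m0 x‖ = 1))
    (hns : μ {x | m0 x = 0} = 0)
    (hlog : Integrable (fun x => Real.log (‖m0 x‖ ^ 2)) μ)
    (ν : Measure (Solenoid r)) (hν : IsPathMeasure r μ m0 ν)
    (A₀ : Set X) (hA₀ : MeasurableSet A₀) (hA₀pos : 0 < μ A₀)
    (hsum : Summable (fun m : ℕ =>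
      ∫ x in A₀, ∏ k ∈ Finset.range (m + 1), ‖m0 (r^[k] x)‖ ^ 2 ∂μ)) :
    ∀ᵐ z ∂ν, ∃ k : ℕ, ∀ n : ℕ, k ≤ n → z.1 n ∉ A₀ := by
  have hu := path_real hr hsurj hfin hinv hm0 hν MeasurableSet.univ 0
  have hfinite : IsFiniteMeasure ν := by
    refine ⟨lt_top_iff_ne_top.2 fun htop => ?_⟩
    simp [Measure.real, htop] at hu
  have hne : ∑' m : ℕ, ν {z | z.1 (m + 1) ∈ A₀} ≠ ⊤ := by
    have he : ∀ m : ℕ, ν {z | z.1 (m + 1) ∈ A₀} = ENNReal.ofReal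
        (∫ x in A₀, ∏ k ∈ Finset.range (m + 1), ‖m0 (r^[k] x)‖ ^ 2 ∂μ) := fun m => by
      rw [← path_real hr hsurj hfin hinv hm0 hν hA₀ (m + 1), ofReal_measureReal]
    simp only [he]
    exact hsum.tsum_ofReal_ne_top
  filter_upwards [ae_eventually_notMem hne] with z hz
  obtain ⟨k, hk⟩ := eventually_atTop.1 hz
  refine ⟨k + 1, fun n hn hmem => ?_⟩
  obtain ⟨m, rfl⟩ : ∃ m, n = m + 1 := ⟨n - 1, by omega⟩
  exact hk m (by omega) hmem
end
end

section
/- Let X be a compact metric space, r : X → X a Borel measurable, onto, finite-to-one map, μ a strongly invariant Borel probability measure with respect to which r is ergodic, and m0 ∈ L∞(X) a QMF filter. If μ has an atom, i.e. there exists z_0 ∈ X with μ({z_0}) > 0, then there exist a point w ∈ X and an integer p ≥ 1 with r^p(w) = w such that the finite cycle C = {w, r(w), …, r^{p-1}(w)} satisfies μ(X ∖ C) = 0, #r⁻¹(x) = 1 for μ-a.e. x ∈ X, and |m0| = 1 μ-a.e. -/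
open MeasureTheory Filter

noncomputable section

/-- If `r` is ergodic for the strongly invariant measure `μ`, `m0` is a QMF filter, and `μ` has
an atom, then `μ` is supported on a finite cycle `C = {w, r w, …, r^{p-1} w}` with `r^p w = w`,
`#r⁻¹(x) = 1` for μ-a.e. `x`, and `|m0| = 1` μ-a.e. -/
theorem atom_implies_cycle_and_unimodular
    {X : Type*} [MetricSpace X] [CompactSpace X] [MeasurableSpace X] [BorelSpace X]
    (r : X → X) (hr : Measurable r) (hsurj : Function.Surjective r)
    (hfin : ∀ x : X, (r ⁻¹' {x}).Finite)
    (μ : Measure X) [IsProbabilityMeasure μ] (hinv : StronglyInvariant r μ)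
    (herg : Ergodic r μ)
    (m0 : X → ℂ) (hm0 : BddMeasC m0) (hqmf : IsQMF r μ m0)
    (hatom : ∃ z₀ : X, 0 < μ {z₀}) :
    ∃ (w : X) (p : ℕ), 1 ≤ p ∧ r^[p] w = w ∧
      μ ((Set.range fun i : Fin p => r^[(i : ℕ)] w)ᶜ) = 0 ∧
      (∀ᵐ x ∂μ, Nat.card (r ⁻¹' {x}) = 1) ∧
      (∀ᵐ x ∂μ, ‖m0 x‖ = 1) := by
  classical
  obtain ⟨w, hw⟩ := hatom
  have hmp : MeasurePreserving r μ μ := herg.toMeasurePreserving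
  obtain ⟨x, hx, p, hp0, hxp⟩ := hmp.conservative.exists_mem_iterate_mem
    (s := {w}) (measurableSet_singleton w).nullMeasurableSet hw.ne'
  rw [Set.mem_singleton_iff] at hx
  subst hx
  have hp : r^[p] x = x := hxp
  have hcardpos : ∀ y, 0 < Nat.card (r ⁻¹' {r y}) := by
    intro y
    have := (hfin (r y)).to_subtype
    have : Nonempty (r ⁻¹' {r y}) := ⟨⟨y, rfl⟩⟩
    exact Nat.card_pos
  have key : ∀ y, μ.real {y} = (Nat.card (r ⁻¹' {r y}) : ℝ)⁻¹ * μ.real {r y} := by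
    intro y
    have h := hinv (Set.indicator {y} (fun _ => (1:ℝ)))
      (measurable_const.indicator (measurableSet_singleton y))
      ⟨1, fun x => by by_cases h : x ∈ ({y} : Set X) <;> simp [h]⟩
    have e : (fun x => (Nat.card (r ⁻¹' {x}) : ℝ)⁻¹ *
        ∑' z : (r ⁻¹' {x}), Set.indicator {y} (fun _ => (1:ℝ)) (z : X))
        = Set.indicator {r y} (fun _ => (Nat.card (r ⁻¹' {r y}) : ℝ)⁻¹) := by
      funext x
      by_cases hx : x = r y
      · subst hx
        rw [tsum_eq_single (⟨y, rfl⟩ : r ⁻¹' {r y})]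
        · simp
        · intro b hb
          have : (b : X) ≠ y := fun h => hb (Subtype.ext h)
          simp [this]
      · have : ∀ z : (r ⁻¹' {x}), Set.indicator {y} (fun _ => (1:ℝ)) (z : X) = 0 := by
          rintro ⟨z, hz⟩
          have : z ≠ y := by
            rintro rfl
            exact hx hz.symm
          simp [this]
        simp [this, hx]
    rw [e, integral_indicator_const _ (measurableSet_singleton _),
      integral_indicator_const _ (measurableSet_singleton _)] at h
    simp only [smul_eq_mul, mul_one] at h
    rw [h, mul_comm]
  have hle : ∀ y, μ.real {y} ≤ μ.real {r y} := by
    intro y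
    rw [key y]
    have h1 : (1:ℝ) ≤ Nat.card (r ⁻¹' {r y}) := by exact_mod_cast hcardpos y
    exact mul_le_of_le_one_left measureReal_nonneg (inv_le_one_of_one_le₀ h1)
  have hmono : Monotone (fun i : ℕ => μ.real {r^[i] x}) := by
    apply monotone_nat_of_le_succ
    intro i
    rw [Function.iterate_succ_apply']
    exact hle _
  have hper : ∀ i, r^[i + p] x = r^[i] x := by
    intro i
    rw [Function.iterate_add_apply, hp]
  have hpos : ∀ i, 0 < μ.real {r^[i] x} := by
    intro i
    have h0 : 0 < μ.real {x} := ENNReal.toReal_pos hw.ne' (measure_ne_top _ _)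
    exact h0.trans_le (hmono (Nat.zero_le i))
  have hcard : ∀ i, Nat.card (r ⁻¹' {r (r^[i] x)}) = 1 := by
    intro i
    have h1 := key (r^[i] x)
    have h2 : μ.real {r (r^[i] x)} ≤ μ.real {r^[i] x} := by
      have := hmono (show i + 1 ≤ i + p by omega)
      simp only [hper, Function.iterate_succ_apply'] at this
      exact this
    have h3 := le_antisymm (hle _) h2
    rw [← h3] at h1
    have h4 := hpos i
    have h5 : (Nat.card (r ⁻¹' {r (r^[i] x)}) : ℝ)⁻¹ = 1 := by
      apply mul_right_cancel₀ h4.ne'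
      rw [← h1, one_mul]
    exact_mod_cast inv_eq_one.mp h5
  set C : Set X := Set.range fun i : Fin p => r^[(i : ℕ)] x with hC
  have hmem : ∀ k, r^[k] x ∈ C := fun k =>
    ⟨⟨k % p, Nat.mod_lt _ (by omega)⟩,
      Function.IsPeriodicPt.iterate_mod_apply (show Function.IsPeriodicPt r p x from hp) k⟩
  have hCsucc : ∀ y ∈ C, ∃ i, y = r (r^[i] x) := by
    rintro _ ⟨i, rfl⟩
    refine ⟨i + p - 1, ?_⟩
    have e : (i : ℕ) + p - 1 + 1 = i + p := by omega
    rw [← Function.iterate_succ_apply' r, Nat.succ_eq_add_one, e, hper]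
  have huniq : ∀ i y, r y = r (r^[i] x) → y = r^[i] x := by
    intro i y hy
    have := (Nat.card_eq_one_iff_unique.mp (hcard i)).1
    have := Subsingleton.elim (⟨y, hy⟩ : r ⁻¹' {r (r^[i] x)}) ⟨r^[i] x, rfl⟩
    exact congrArg Subtype.val this
  have hinvC : r ⁻¹' C = C := by
    ext y
    constructor
    · intro hy
      obtain ⟨i, hi⟩ := hCsucc _ hy
      rw [huniq i y hi]
      exact hmem i
    · rintro ⟨i, rfl⟩
      change r (r^[i] x) ∈ C
      rw [← Function.iterate_succ_apply' r]
      exact hmem _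
  have hCm : MeasurableSet C := (Set.finite_range _).measurableSet
  have hCnull : μ Cᶜ = 0 := by
    rcases herg.toPreErgodic.measure_self_or_compl_eq_zero hCm hinvC with h | h
    · exact absurd (measure_mono_null (Set.singleton_subset_iff.mpr (hmem 0)) h) hw.ne'
    · exact h
  have hae : ∀ᵐ y ∂μ, y ∈ C := hCnull
  refine ⟨x, p, hp0.bot_lt, hp, hCnull, ?_, ?_⟩
  · filter_upwards [hae] with y hy
    obtain ⟨i, rfl⟩ := hCsucc y hy
    exact hcard i
  · filter_upwards [hae] with y hy
    obtain ⟨i, rfl⟩ := hy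
    simp only
    generalize (i : ℕ) = i
    have hq : (Nat.card (r ⁻¹' {r (r^[i] x)}) : ℝ)⁻¹ *
        ∑' y : (r ⁻¹' {r (r^[i] x)}), ‖m0 (y : X)‖ ^ 2 = 1 := by
      by_contra hne
      have h0 : μ {r (r^[i] x)} = 0 :=
        measure_mono_null (Set.singleton_subset_iff.mpr hne) hqmf
      have h1 := (hpos i).trans_le (hle _)
      simp [Measure.real, h0] at h1
    rw [hcard i, tsum_eq_single (⟨r^[i] x, rfl⟩ : r ⁻¹' {r (r^[i] x)})] at hq
    · simp only [Nat.cast_one, inv_one, one_mul] at hq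
      exact (pow_eq_one_iff_of_nonneg (norm_nonneg _) two_ne_zero).mp hq
    · intro b hb
      exact absurd (Subtype.ext (huniq i b b.2)) hb
end
end
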